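/- arXiv:2308.12702 — 5 statements merged into one kernel-verified Lean document; each statement's English description precedes it below -/
import Mathlib

section
/- Let n ≥ 6 and let K_1, …, K_m be nonempty compact convex subsets of ℝ^n with m = ⌊(n − r_n − 1)/3⌋, where r_n = 5 if n ≡ 1 or 2 (mod 4), r_n = 4 if n ≡ 0 (mod 4), and r_n = 3 if n ≡ 3 (mod 4). Then there exist pairwise orthogonal unit vectors v_1, …, v_6 ∈ ℝ^n such that for every i, w_{K_i}(v_1) = w_{K_i}(v_2), w_{K_i}(v_3) = w_{K_i}(v_4), and w_{K_i}(v_5) = w_{K_i}(v_6). (Equivalently, there is an orthogonal decomposition ℝ^n = ℝ^2 ⊕ ℝ^2 ⊕ ℝ^2 ⊕ ℝ^{n-6} such that each region is inscribed in S × S × S × ℝ^{n-6} where S is a square.) -/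
open scoped RealInnerProductSpace

/-- The width of a set `K ⊆ ℝⁿ` in direction `v`:
`w_K(v) = sup_{x ∈ K} ⟪x, v⟫ − inf_{x ∈ K} ⟪x, v⟫`. -/
noncomputable def dirWidth {n : ℕ} (K : Set (EuclideanSpace ℝ (Fin n)))
    (v : EuclideanSpace ℝ (Fin n)) : ℝ :=
  sSup ((fun x => ⟪x, v⟫) '' K) - sInf ((fun x => ⟪x, v⟫) '' K)

/-- `r_n = 5` if `n ≡ 1, 2 (mod 4)`, `4` if `n ≡ 0 (mod 4)`, `3` if `n ≡ 3 (mod 4)`. -/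
def flipStiefelR (n : ℕ) : ℕ :=
  if n % 4 = 0 then 4 else if n % 4 = 3 then 3 else 5


namespace BU

/-- value of the cochain `g` on the (mod 2) boundary of a tuple -/
def bd {E : Type*} : (List E → ZMod 2) → List E → ZMod 2
  | _, [] => 0
  | g, x :: l => g l + bd (fun t => g (x :: t)) l

section
variable {E : Type*}

lemma z2 (a : ZMod 2) : a + a = 0 := CharTwo.add_self_eq_zero a

lemma bd_add (g h : List E → ZMod 2) (l : List E) :
    bd (fun t => g t + h t) l = bd g l + bd h l := by
  induction l generalizing g h with
  | nil => simp [bd]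
  | cons x l ih => simp only [bd, ih]; ring

lemma bd_congr {g h : List E → ZMod 2} {l : List E}
    (H : ∀ t, t.Sublist l → t.length + 1 = l.length → g t = h t) : bd g l = bd h l := by
  induction l generalizing g h with
  | nil => simp [bd]
  | cons x l ih =>
    simp only [bd]
    rw [H l (List.sublist_cons_self x l) (by simp)]
    congr 1
    apply ih
    intro t ht hl
    exact H _ (ht.cons_cons x) (by simp [hl])

lemma bd_bd (g : List E → ZMod 2) (l : List E) : bd (bd g) l = 0 := by
  induction l generalizing g with
  | nil => simp [bd]
  | cons x l ih =>
    simp only [bd]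
    rw [bd_add, ih, add_zero, z2]

lemma bd_zero (l : List E) : bd (fun _ => 0) l = 0 := by
  induction l with
  | nil => simp [bd]
  | cons x l ih => simp [bd, ih]

lemma bd_map {F : Type*} (f : E → F) (g : List F → ZMod 2) (l : List E) :
    bd (fun t => g (t.map f)) l = bd g (l.map f) := by
  induction l generalizing g with
  | nil => simp [bd]
  | cons x l ih =>
    simp only [bd, List.map_cons]
    rw [ih (fun t => g (f x :: t))]

lemma bd_perm {g : List E → ZMod 2} {l l' : List E} (h : l.Perm l')
    (hg : ∀ t t', t.Perm t' → g t = g t') : bd g l = bd g l' := by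
  induction h generalizing g with
  | nil => rfl
  | cons x p ih =>
    simp only [bd]
    rw [hg _ _ p, ih (fun t t' h => hg _ _ (h.cons x))]
  | swap x y l =>
    simp only [bd]
    have : (fun t => g (x :: y :: t)) = fun t => g (y :: x :: t) := by
      funext t; exact hg _ _ (List.Perm.swap _ _ _)
    rw [this]; ring
  | trans _ _ ih1 ih2 => rw [ih1 hg, ih2 hg]

end

/-- alternating sign indicator -/
def alt : Bool → List Bool → ZMod 2
  | _, [] => 1
  | s, b :: l => if b = s then alt (!s) l else 0

lemma bd_alt (s : Bool) (l : List Bool) (hl : l ≠ []) :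
    bd (alt s) l = alt s l + alt (!s) l := by
  induction l generalizing s with
  | nil => exact absurd rfl hl
  | cons b l ih =>
    have hb : bd (alt s) (b :: l) = alt s l + if b = s then bd (alt (!s)) l else 0 := by
      simp only [bd]
      by_cases h : b = s
      · simp only [alt, h, if_true]
      · simp only [alt, h, if_false, bd_zero]
    rw [hb]
    by_cases hl' : l = []
    · subst hl'
      cases b <;> cases s <;> simp [alt, bd]
    · rw [ih _ hl']
      have h3 := z2 (alt s l)
      have h4 := z2 (alt (!s) l)
      cases b <;> cases s <;> simp_all [alt]
      all_goals
        first
        | (rw [add_left_comm, h3, add_zero])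
        | (rw [add_left_comm, h4, add_zero])
        | skip

/-- flip the sign of a label -/
def flip (k : ℕ) : ℕ := if k % 2 = 0 then k + 1 else k - 1

def sgn (k : ℕ) : Bool := decide (k % 2 = 1)

lemma sgn_flip (k : ℕ) : sgn (flip k) = !sgn k := by
  unfold sgn flip
  rcases Nat.mod_two_eq_zero_or_one k with h | h
  · have : (k + 1) % 2 = 1 := by omega
    simp [h, this]
  · have : (k - 1) % 2 = 0 := by omega
    simp [h, this]

def srt (L : List ℕ) : List ℕ := L.insertionSort (· ≤ ·)

lemma srt_perm (L : List ℕ) : (srt L).Perm L := List.perm_insertionSort _ _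
lemma srt_sorted (L : List ℕ) : (srt L).Pairwise (· ≤ ·) := List.pairwise_insertionSort _ _

lemma srt_unique {L L' : List ℕ} (h : L.Perm L') (hs : L'.Pairwise (· ≤ ·)) : srt L = L' :=
  ((srt_perm L).trans h).eq_of_pairwise' (srt_sorted L) hs

lemma srt_congr {L L' : List ℕ} (h : L.Perm L') : srt L = srt L' :=
  srt_unique (h.trans (srt_perm L').symm) (srt_sorted L')

def fan (s : Bool) (L : List ℕ) : ZMod 2 := alt s ((srt L).map sgn)

lemma bd_fan (s : Bool) (L : List ℕ) (hL : L ≠ []) : bd (fan s) L = fan s L + fan (!s) L := by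
  rw [bd_perm (srt_perm L).symm (fun t t' h => by unfold fan; rw [srt_congr h])]
  have : bd (fan s) (srt L) = bd (fun t => alt s (t.map sgn)) (srt L) := by
    apply bd_congr
    intro t ht _
    unfold fan
    rw [srt_unique (List.Perm.refl t) ((srt_sorted L).sublist ht)]
  rw [this, bd_map, bd_alt]
  · rfl
  · intro h
    have := (srt_perm L).length_eq
    have h' : srt L = [] := by simpa using h
    rw [h'] at this
    exact hL (List.length_eq_zero_iff.mp this.symm)

def Good (L : List ℕ) : Prop := ∀ a ∈ L, ∀ b ∈ L, a / 2 = b / 2 → a = b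

lemma alt_flip (s : Bool) (l : List Bool) : alt s (l.map (!·)) = alt (!s) l := by
  induction l generalizing s with
  | nil => simp [alt]
  | cons b l ih => cases b <;> cases s <;> simp [alt, ih]

lemma fan_flip (s : Bool) (L : List ℕ) (hL : Good L) : fan s (L.map flip) = fan (!s) L := by
  unfold fan
  have : srt (L.map flip) = (srt L).map flip := by
    apply srt_unique ((srt_perm L).symm.map flip)
    rw [List.pairwise_map]
    refine (srt_sorted L).imp_of_mem ?_
    intro a b ha hb hab
    have := hL a ((srt_perm L).mem_iff.mp ha) b ((srt_perm L).mem_iff.mp hb)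
    unfold flip
    split_ifs <;> omega
  rw [this, List.map_map, ← alt_flip, List.map_map]
  congr 2
  funext k
  exact sgn_flip k

lemma alt_len (m : ℕ) (s : Bool) (a : ℕ) (l : List ℕ) (hs : (a :: l).Pairwise (· ≤ ·))
    (hg : Good (a :: l)) (hm : ∀ k ∈ a :: l, k < 2 * m) (ha : alt s ((a :: l).map sgn) ≠ 0) :
    (a :: l).length + a / 2 ≤ m := by
  induction l generalizing a s with
  | nil => have := hm a (by simp); simp; omega
  | cons b t ih =>
    have h1 : sgn a = s := by
      by_contra h; simp [alt, h] at ha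
    have h2 : alt (!s) ((b :: t).map sgn) ≠ 0 := by
      simpa [alt, h1] using ha
    have h3 : sgn b = !s := by
      by_contra h; simp [alt, h] at h2
    have := ih (!s) b hs.tail (fun x hx y hy => hg x (List.mem_cons_of_mem _ hx) y
      (List.mem_cons_of_mem _ hy)) (fun k hk => hm k (List.mem_cons_of_mem _ hk)) h2
    have hab : a ≤ b := by
      rw [List.pairwise_cons] at hs
      exact hs.1 b (by simp)
    have hne : a / 2 ≠ b / 2 := by
      intro h
      have := hg a (by simp) b (by simp) h
      subst this
      rw [h1] at h3
      cases s <;> simp at h3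
    simp only [List.length_cons] at *
    omega

lemma fan_zero (m : ℕ) (s : Bool) (L : List ℕ) (hg : Good L) (hm : ∀ k ∈ L, k < 2 * m)
    (hL : L.length = m + 1) : fan s L = 0 := by
  by_contra h
  unfold fan at h
  have hl := (srt_perm L).length_eq
  have hmem : ∀ x, x ∈ srt L ↔ x ∈ L := fun x => (srt_perm L).mem_iff
  have hs := srt_sorted L
  generalize srt L = M at *
  cases M with
  | nil => simp at hl; omega
  | cons a l =>
    have := alt_len m s a l hs (fun x hx y hy => hg x ((hmem x).1 hx) y ((hmem y).1 hy))
      (fun k hk => hm k ((hmem k).1 hk)) h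
    omega

section
variable {E : Type*} [NormedAddCommGroup E] [NormedSpace ℝ E]

noncomputable def bar (l : List E) : E := (l.length : ℝ)⁻¹ • l.sum

noncomputable def SD : ℕ → (List E → ZMod 2) → List E → ZMod 2
  | 0, g, l => g l
  | n + 1, g, l => bd (SD n (fun t => g (bar l :: t))) l

noncomputable def S (g : List E → ZMod 2) (l : List E) : ZMod 2 := SD l.length g l

lemma SD_add (n : ℕ) (g h : List E → ZMod 2) (l : List E) :
    SD n (fun t => g t + h t) l = SD n g l + SD n h l := by
  induction n generalizing g h l with
  | zero => rfl
  | succ n ih =>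
    simp only [SD]
    rw [← bd_add]
    apply bd_congr
    intro t _ _
    exact ih _ _ _

lemma S_add (g h : List E → ZMod 2) : S (fun t => g t + h t) = fun l => S g l + S h l := by
  funext l; exact SD_add _ _ _ _

lemma bd_SD (n : ℕ) (g : List E → ZMod 2) (l : List E) (hl : l.length = n + 1) :
    SD (n + 1) (bd g) l = bd (SD n g) l := by
  induction n generalizing g l with
  | zero =>
    match l, hl with
    | [x], _ => simp [SD, bd]
  | succ n ih =>
    rw [SD]
    simp only [bd]
    have : bd (SD (n + 1) fun t => g t + bd (fun t => g (bar l :: t)) t) l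
        = bd (fun t => SD (n+1) g t + bd (SD n (fun t => g (bar l :: t))) t) l := by
      apply bd_congr
      intro t _ ht
      rw [SD_add]
      congr 1
      exact ih _ t (by omega)
    rw [this, bd_add]
    have h2 := bd_bd (SD n (fun t => g (bar l :: t))) l
    rw [show bd (fun t => bd (SD n (fun t => g (bar l :: t))) t) l = 0 from h2, add_zero]

lemma S_bd (g : List E → ZMod 2) : S (bd g) = bd (S g) := by
  funext l
  unfold S
  cases l with
  | nil => simp [SD, bd]
  | cons x l =>
    rw [List.length_cons, bd_SD _ _ _ (by simp)]
    apply bd_congr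
    intro t _ ht
    have : t.length = l.length := by simpa using ht
    rw [this]

lemma bar_neg (l : List E) : bar (l.map (fun x => -x)) = - bar l := by
  unfold bar
  have : (l.map (fun x => -x)).sum = - l.sum := by
    induction l with
    | nil => simp
    | cons x l ih => simp [ih]; abel
  rw [this]; simp

lemma SD_neg (n : ℕ) (g : List E → ZMod 2) (l : List E) :
    SD n (fun t => g (t.map (fun x => -x))) l = SD n g (l.map (fun x => -x)) := by
  induction n generalizing g l with
  | zero => rfl
  | succ n ih =>
    simp only [SD]
    rw [← bd_map]
    apply bd_congr
    intro t _ _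
    rw [← ih, bar_neg]
    rfl

lemma S_neg (g : List E → ZMod 2) :
    S (fun t => g (t.map (fun x => -x))) = fun l => S g (l.map (fun x => -x)) := by
  funext l
  unfold S
  rw [SD_neg]; simp

lemma bar_mem {C : Set E} (hC : Convex ℝ C) {l : List E} (hl : l ≠ []) (h : ∀ x ∈ l, x ∈ C) :
    bar l ∈ C := by
  have h0 : (0:ℝ) < l.length := by
    exact_mod_cast List.length_pos_iff.mpr hl
  have h1 : bar l = ∑ i : Fin l.length, (l.length : ℝ)⁻¹ • l[i] := by
    unfold bar
    rw [← Finset.smul_sum]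
    congr 1
    simp
  rw [h1]
  apply hC.sum_mem
  · intro i _; positivity
  · simp; field_simp
  · intro i _; exact h _ (by simp)

lemma bar_dist {l : List E} {r : ℝ} (h : ∀ x ∈ l, ∀ y ∈ l, dist x y ≤ r) (M : ℕ)
    (hM : l.length ≤ M) (y : E) (hy : y ∈ l) : dist (bar l) y ≤ (1 - (M : ℝ)⁻¹) * r := by
  have hpos : 0 < l.length := List.length_pos_iff.mpr (List.ne_nil_of_mem hy)
  have h0 : (0:ℝ) < l.length := by exact_mod_cast hpos
  have hr : 0 ≤ r := le_trans dist_nonneg (h y hy y hy)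
  have h1 : bar l - y = (l.length : ℝ)⁻¹ • (l.map (fun x => x - y)).sum := by
    have : (l.map (fun x => x - y)).sum = l.sum - (l.length : ℝ) • y := by
      clear h hy hM hpos h0
      induction l with
      | nil => simp
      | cons x l ih => simp [ih, add_smul]; abel
    rw [this, smul_sub, smul_smul, inv_mul_cancel₀ h0.ne', one_smul]; rfl
  have h2 : ∀ l' : List E, (∀ x ∈ l', dist x y ≤ r) →
      ‖(l'.map (fun x => x - y)).sum‖ ≤ l'.length * r := by
    intro l' h'
    induction l' with
    | nil => simp
    | cons x l' ih =>
      have a1 := ih (fun z hz => h' z (List.mem_cons_of_mem _ hz))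
      have a2 := h' x (by simp)
      rw [dist_eq_norm] at a2
      simp only [List.map_cons, List.sum_cons, List.length_cons, Nat.cast_add, Nat.cast_one]
      have := norm_add_le (x - y) (l'.map (fun x => x - y)).sum
      linarith
  obtain ⟨l1, l2, rfl⟩ := List.append_of_mem hy
  have h3 := h2 (l1 ++ l2) (fun x hx => h x (by
    simp only [List.mem_append, List.mem_cons] at hx ⊢; tauto) y hy)
  rw [dist_eq_norm, h1]
  have h4 : ((l1 ++ y :: l2).map (fun x => x - y)).sum = ((l1 ++ l2).map (fun x => x - y)).sum := by
    simp
  rw [h4, norm_smul, Real.norm_of_nonneg (by positivity)]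
  have h5 : ((l1 ++ y :: l2).length : ℝ) = (l1 ++ l2).length + 1 := by
    simp; ring
  have hMr : ((l1 ++ y :: l2).length : ℝ) ≤ M := by exact_mod_cast hM
  calc _ ≤ ((l1 ++ y :: l2).length : ℝ)⁻¹ * ((l1 ++ l2).length * r) := by gcongr
    _ = (1 - ((l1 ++ y :: l2).length : ℝ)⁻¹) * r := by
      rw [h5] at h0 ⊢
      field_simp; ring
    _ ≤ _ := by gcongr

lemma SD_congr (M : ℕ) {n : ℕ} {g h : List E → ZMod 2} {l : List E} {C : Set E} {r : ℝ}
    (hn : l.length = n) (hM : n ≤ M) (hC : Convex ℝ C) (hlC : ∀ x ∈ l, x ∈ C)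
    (hr : ∀ x ∈ l, ∀ y ∈ l, dist x y ≤ r) (hr0 : 0 ≤ r)
    (H : ∀ t : List E, t.length = n → (∀ x ∈ t, x ∈ C) →
      (∀ x ∈ t, ∀ y ∈ t, dist x y ≤ (1 - (M : ℝ)⁻¹) * r) → g t = h t) :
    SD n g l = SD n h l := by
  induction n generalizing g h l C with
  | zero =>
    have : l = [] := List.length_eq_zero_iff.mp hn
    subst this
    exact H [] rfl (by simp) (by simp)
  | succ n ih =>
    simp only [SD]
    apply bd_congr
    intro t ht htl
    have hne : l ≠ [] := by rintro rfl; simp at hn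
    have hM1 : (0:ℝ) ≤ 1 - (M : ℝ)⁻¹ := by
      have : (1:ℝ) ≤ M := by exact_mod_cast (by omega : 1 ≤ M)
      have := inv_le_one_of_one_le₀ this
      linarith
    apply ih (C := C ∩ Metric.closedBall (bar l) ((1 - (M : ℝ)⁻¹) * r)) (by omega) (by omega)
      (hC.inter (convex_closedBall _ _))
    · intro x hx
      refine ⟨hlC x (ht.subset hx), ?_⟩
      rw [Metric.mem_closedBall, dist_comm]
      exact bar_dist hr M (by omega) x (ht.subset hx)
    · intro x hx y hy
      exact hr x (ht.subset hx) y (ht.subset hy)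
    · intro u hu huC hud
      apply H
      · simp [hu]
      · intro x hx
        rcases List.mem_cons.mp hx with rfl | hx
        · exact bar_mem hC hne hlC
        · exact (huC x hx).1
      · intro x hx y hy
        rcases List.mem_cons.mp hx with rfl | hx <;> rcases List.mem_cons.mp hy with rfl | hy
        · rw [dist_self]; positivity
        · rw [dist_comm]; exact (huC y hy).2
        · exact (huC x hx).2
        · exact hud x hx y hy

lemma S_iter_congr (M N : ℕ) {g h : List E → ZMod 2} {l : List E} {C : Set E} {r : ℝ}
    (hM : l.length ≤ M) (hM1 : 1 ≤ M) (hC : Convex ℝ C) (hlC : ∀ x ∈ l, x ∈ C)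
    (hr : ∀ x ∈ l, ∀ y ∈ l, dist x y ≤ r) (hr0 : 0 ≤ r)
    (H : ∀ t : List E, t.length = l.length → (∀ x ∈ t, x ∈ C) →
      (∀ x ∈ t, ∀ y ∈ t, dist x y ≤ (1 - (M : ℝ)⁻¹) ^ N * r) → g t = h t) :
    S^[N] g l = S^[N] h l := by
  have hM1 : (0:ℝ) ≤ 1 - (M : ℝ)⁻¹ := by
    have : (1:ℝ) ≤ M := by exact_mod_cast hM1
    have := inv_le_one_of_one_le₀ this
    linarith
  induction N generalizing l r with
  | zero => exact H l rfl hlC (by simpa using hr)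
  | succ N ih =>
    rw [Function.iterate_succ_apply', Function.iterate_succ_apply']
    apply SD_congr M rfl hM hC hlC hr hr0
    intro t ht htC htd
    apply ih (by omega) htC htd (by positivity)
    intro u hu huC hud
    apply H u (by omega) huC
    intro x hx y hy
    rw [pow_succ, mul_assoc]
    exact hud x hx y hy

/-- evaluation on the octahedral sphere -/
def Sph (e : ℕ → E) : ℕ → (List E → ZMod 2) → ZMod 2
  | 0, g => g []
  | q + 1, g => Sph e q (fun t => g (e q :: t)) + Sph e q (fun t => g (-e q :: t))

lemma Sph_add (e : ℕ → E) (q : ℕ) (g h : List E → ZMod 2) :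
    Sph e q (fun t => g t + h t) = Sph e q g + Sph e q h := by
  induction q generalizing g h with
  | zero => rfl
  | succ q ih => simp only [Sph, ih]; ring

lemma Sph_bd (e : ℕ → E) (q : ℕ) (g : List E → ZMod 2) : Sph e q (bd g) = 0 := by
  induction q generalizing g with
  | zero => rfl
  | succ q ih =>
    simp only [Sph, bd]
    rw [Sph_add, Sph_add]
    have h1 := ih (fun t => g (e q :: t))
    have h2 := ih (fun t => g (-e q :: t))
    rw [show Sph e q (fun t => bd (fun t => g (e q :: t)) t) = 0 from h1,
      show Sph e q (fun t => bd (fun t => g (-e q :: t)) t) = 0 from h2, add_zero, z2]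

lemma Sph_neg (e : ℕ → E) (q : ℕ) (g : List E → ZMod 2) :
    Sph e q (fun t => g (t.map (fun x => -x))) = Sph e q g := by
  induction q generalizing g with
  | zero => rfl
  | succ q ih =>
    simp only [Sph, List.map_cons, neg_neg]
    rw [ih (fun t => g (-e q :: t)), ih (fun t => g (e q :: t)), add_comm]

lemma Sph_congr (e : ℕ → E) (q : ℕ) {g h : List E → ZMod 2}
    (H : ∀ l : List E, l.length = q → (∃ s : ℕ → ℝ, (∀ i, s i = 1 ∨ s i = -1) ∧
      ∀ x ∈ l, ∃ i < q, x = s i • e i) → g l = h l) : Sph e q g = Sph e q h := by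
  induction q generalizing g h with
  | zero => exact H [] rfl ⟨fun _ => 1, by simp, by simp⟩
  | succ q ih =>
    simp only [Sph]
    have key : ∀ σ : ℝ, (σ = 1 ∨ σ = -1) → ∀ l : List E, l.length = q →
        (∃ s : ℕ → ℝ, (∀ i, s i = 1 ∨ s i = -1) ∧ ∀ x ∈ l, ∃ i < q, x = s i • e i) →
        g (σ • e q :: l) = h (σ • e q :: l) := by
      rintro σ hσ l hl ⟨s, hs, hx⟩
      apply H _ (by simp [hl])
      refine ⟨Function.update s q σ, ?_, ?_⟩
      · intro i
        by_cases hi : i = q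
        · subst hi; simpa using hσ
        · simpa [hi] using hs i
      · intro x hxl
        rcases List.mem_cons.mp hxl with rfl | hxl
        · exact ⟨q, by omega, by simp⟩
        · obtain ⟨i, hi, rfl⟩ := hx x hxl
          exact ⟨i, by omega, by simp [hi.ne]⟩
    congr 1
    · apply ih
      intro l hl hs
      simpa using key 1 (Or.inl rfl) l hl hs
    · apply ih
      intro l hl hs
      simpa using key (-1) (Or.inr rfl) l hl hs

lemma iter_add (N : ℕ) (g h : List E → ZMod 2) (l : List E) :
    S^[N] (fun t => g t + h t) l = S^[N] g l + S^[N] h l := by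
  induction N generalizing l g h with
  | zero => rfl
  | succ N ih => rw [Function.iterate_succ_apply, S_add, ih]; rfl

lemma iter_bd (N : ℕ) (g : List E → ZMod 2) : S^[N] (bd g) = bd (S^[N] g) := by
  induction N generalizing g with
  | zero => rfl
  | succ N ih => rw [Function.iterate_succ_apply, S_bd, ih]; rfl

lemma iter_neg (N : ℕ) (g : List E → ZMod 2) :
    S^[N] (fun t => g (t.map (fun x => -x))) = fun l => S^[N] g (l.map (fun x => -x)) := by
  induction N generalizing g with
  | zero => rfl
  | succ N ih => rw [Function.iterate_succ_apply, S_neg, ih]; rfl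

lemma iter_nil (N : ℕ) (g : List E → ZMod 2) : S^[N] g [] = g [] := by
  induction N generalizing g with
  | zero => rfl
  | succ N ih => rw [Function.iterate_succ_apply, ih]; rfl

/-- One inductive step of the Fan count. -/
lemma sph_step (e : ℕ → E) (q N : ℕ) (α : List E → ZMod 2)
    (H : Sph e q (fun t => S^[N] (fun t => α t + α (t.map (fun x => -x))) (e q :: t))
      = Sph e q (fun t => S^[N] (bd α) (e q :: t))) :
    Sph e (q + 1) (S^[N] α) = Sph e q (S^[N] α) := by
  simp only [Sph]
  have h1 : Sph e q (fun t => S^[N] α (-e q :: t)) =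
      Sph e q (fun t => S^[N] (fun t => α (t.map (fun x => -x))) (e q :: t)) := by
    rw [iter_neg, ← Sph_neg]
    rfl
  rw [h1, ← Sph_add]
  simp only [iter_add] at H
  rw [H, iter_bd]
  simp only [bd]
  rw [Sph_add]
  rw [show Sph e q (fun t => bd (fun t => S^[N] α (e q :: t)) t) = 0 from Sph_bd _ _ _, add_zero]

end

section
variable {m : ℕ}

def KK (m : ℕ) : Set (Fin (m + 1) → ℝ) := {x | ∑ i, |x i| = 1}

def ee (m : ℕ) (i : ℕ) : Fin (m + 1) → ℝ := fun j => if (j : ℕ) = i then 1 else 0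

def CC (m : ℕ) (s : ℕ → ℝ) : Set (Fin (m + 1) → ℝ) :=
  {x | (∀ i : Fin (m + 1), 0 ≤ s i * x i) ∧ ∑ i : Fin (m + 1), s i * x i = 1}

lemma CC_convex (s : ℕ → ℝ) : Convex ℝ (CC m s) := by
  rintro x ⟨hx1, hx2⟩ y ⟨hy1, hy2⟩ a b ha hb hab
  refine ⟨fun i => ?_, ?_⟩
  · have := mul_nonneg ha (hx1 i)
    have := mul_nonneg hb (hy1 i)
    simp only [Pi.add_apply, Pi.smul_apply, smul_eq_mul]
    nlinarith
  · have : ∑ i : Fin (m + 1), s i * (a • x + b • y) i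
        = a * (∑ i : Fin (m + 1), s i * x i) + b * ∑ i : Fin (m + 1), s i * y i := by
      rw [Finset.mul_sum, Finset.mul_sum, ← Finset.sum_add_distrib]
      apply Finset.sum_congr rfl
      intro i _
      simp only [Pi.add_apply, Pi.smul_apply, smul_eq_mul]; ring
    rw [this, hx2, hy2]; linarith

lemma CC_KK {s : ℕ → ℝ} (hs : ∀ i, s i = 1 ∨ s i = -1) : CC m s ⊆ KK m := by
  rintro x ⟨hx1, hx2⟩
  unfold KK
  rw [Set.mem_setOf_eq, ← hx2]
  apply Finset.sum_congr rfl
  intro i _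
  have := hx1 i
  rcases hs i with h | h
  · rw [h] at this ⊢; rw [abs_of_nonneg (by linarith)]; ring
  · rw [h] at this ⊢; rw [abs_of_nonpos (by linarith)]; ring

lemma ee_CC {s : ℕ → ℝ} (hs : ∀ i, s i = 1 ∨ s i = -1) {i : ℕ} (hi : i < m + 1) :
    s i • ee m i ∈ CC m s := by
  have hsq : ∀ i, s i * s i = 1 := fun i => by rcases hs i with h | h <;> rw [h] <;> norm_num
  have hv : ∀ j : Fin (m + 1), s j * (s i • ee m i) j = if j = ⟨i, hi⟩ then 1 else 0 := by
    intro j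
    simp only [ee, Pi.smul_apply, smul_eq_mul, Fin.ext_iff]
    split_ifs with h
    · rw [h, mul_one, hsq]
    · simp
  refine ⟨fun j => ?_, ?_⟩
  · rw [hv]; split_ifs <;> norm_num
  · rw [Finset.sum_congr rfl (fun j _ => hv j)]; simp

lemma KK_norm {x : Fin (m + 1) → ℝ} (hx : x ∈ KK m) : ‖x‖ ≤ 1 := by
  rw [pi_norm_le_iff_of_nonneg zero_le_one]
  intro i
  rw [← show ∑ i, |x i| = 1 from hx, Real.norm_eq_abs]
  exact Finset.single_le_sum (f := fun i => |x i|) (fun i _ => abs_nonneg _) (Finset.mem_univ i)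

lemma KK_compact : IsCompact (KK m) := by
  apply (isCompact_closedBall (0 : Fin (m + 1) → ℝ) 1).of_isClosed_subset
  · exact isClosed_eq (by fun_prop) continuous_const
  · intro x hx
    simpa using KK_norm hx

lemma tucker (lab : (Fin (m + 1) → ℝ) → ℕ) (δ : ℝ) (hδ : 0 < δ)
    (h1 : ∀ x ∈ KK m, lab x < 2 * m)
    (h2 : ∀ x ∈ KK m, lab (-x) = flip (lab x))
    (h3 : ∀ x ∈ KK m, ∀ y ∈ KK m, dist x y < δ → lab x / 2 = lab y / 2 → lab x = lab y) :
    False := by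
  have hρ : (1 - ((m + 1 : ℕ) : ℝ)⁻¹) < 1 := by
    have : (0:ℝ) < ((m + 1 : ℕ) : ℝ)⁻¹ := by positivity
    linarith
  obtain ⟨N, hN⟩ := exists_pow_lt_of_lt_one (half_pos hδ) hρ
  have hcong : ∀ (g h : List (Fin (m + 1) → ℝ) → ZMod 2) (l : List (Fin (m + 1) → ℝ)),
      l.length ≤ m + 1 → (∃ s : ℕ → ℝ, (∀ i, s i = 1 ∨ s i = -1) ∧
      ∀ x ∈ l, ∃ i < m + 1, x = s i • ee m i) →
      (∀ t : List (Fin (m + 1) → ℝ), t.length = l.length → (∀ x ∈ t, x ∈ KK m) →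
        Good (t.map lab) → g t = h t) → S^[N] g l = S^[N] h l := by
    rintro g h l hl ⟨s, hs, hx⟩ H
    have hlC : ∀ x ∈ l, x ∈ CC m s := by
      intro x hxl
      obtain ⟨i, hi, rfl⟩ := hx x hxl
      exact ee_CC hs hi
    apply S_iter_congr (m + 1) N (r := 2) hl (by omega) (CC_convex s) hlC
    · intro x hx y hy
      have a1 := KK_norm (CC_KK hs (hlC x hx))
      have a2 := KK_norm (CC_KK hs (hlC y hy))
      have := dist_le_norm_add_norm x y
      linarith
    · norm_num
    · intro t ht htC htd
      apply H t ht (fun x hx => CC_KK hs (htC x hx))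
      intro a ha b hb hab
      obtain ⟨x, hx, rfl⟩ := List.mem_map.mp ha
      obtain ⟨y, hy, rfl⟩ := List.mem_map.mp hb
      apply h3 x (CC_KK hs (htC x hx)) y (CC_KK hs (htC y hy)) _ hab
      have := htd x hx y hy
      linarith
  let α : List (Fin (m + 1) → ℝ) → ZMod 2 := fun l => fan true (l.map lab)
  have hone : ∀ q ≤ m + 1, Sph (ee m) q (S^[N] α) = 1 := by
    intro q
    induction q with
    | zero => intro _; simp only [Sph]; rw [iter_nil]; rfl
    | succ q ih =>
      intro hq
      rw [sph_step, ih (by omega)]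
      apply Sph_congr
      rintro l hl ⟨s, hs, hx⟩
      apply hcong _ _ _ (by simp [hl]; omega)
      · refine ⟨Function.update s q 1, ?_, ?_⟩
        · intro i
          by_cases hi : i = q
          · subst hi; simp
          · simpa [hi] using hs i
        · intro x hxl
          rcases List.mem_cons.mp hxl with rfl | hxl
          · exact ⟨q, by omega, by simp⟩
          · obtain ⟨i, hi, rfl⟩ := hx x hxl
            exact ⟨i, by omega, by simp [hi.ne]⟩
      · intro t ht htK hg
        have hne : t.map lab ≠ [] := by
          intro h
          have : t = [] := by simpa using h
          subst this
          simp at ht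
        change _ = bd (fun t => fan true (t.map lab)) t
        rw [bd_map, bd_fan _ _ hne, ← fan_flip _ _ hg]
        congr 1
        change fan true _ = _
        congr 1
        rw [List.map_map, List.map_map]
        apply List.map_congr_left
        intro x hx
        exact h2 x (htK x hx)
  have hz := hone (m + 1) le_rfl
  have : Sph (ee m) (m + 1) (S^[N] α) = Sph (ee m) (m + 1) (S^[N] (fun t => α t + α t)) := by
    apply Sph_congr
    rintro l hl hs
    apply hcong _ _ _ (by omega) hs
    intro t ht htK hg
    rw [z2]
    apply fan_zero m _ _ hg
    · intro k hk
      obtain ⟨x, hx, rfl⟩ := List.mem_map.mp hk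
      exact h1 x (htK x hx)
    · simp; omega
  rw [this] at hz
  have h0 : (S^[N] (fun t => α t + α t)) = fun t => S^[N] α t + S^[N] α t := by
    funext t; exact iter_add _ _ _ _
  rw [h0, Sph_add, z2] at hz
  exact zero_ne_one hz

theorem borsuk_ulam (F : (Fin (m + 1) → ℝ) → Fin m → ℝ) (hc : Continuous F)
    (hodd : ∀ x, F (-x) = -F x) : ∃ x, x ≠ 0 ∧ F x = 0 := by
  by_contra! hno
  have hK0 : ∀ x ∈ KK m, F x ≠ 0 := by
    intro x hx
    apply hno
    rintro rfl
    simp [KK] at hx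
  have hKne : (KK m).Nonempty := ⟨_, CC_KK (s := fun _ => 1) (by simp)
    (ee_CC (s := fun _ => 1) (by simp) (i := 0) (by omega))⟩
  obtain ⟨x₀, hx₀, hmin⟩ := KK_compact.exists_isMinOn hKne (hc.norm.continuousOn)
  obtain ⟨c, hcdef⟩ : ∃ c, c = ‖F x₀‖ := ⟨_, rfl⟩
  have hcpos : 0 < c := by rw [hcdef]; exact norm_pos_iff.mpr (hK0 x₀ hx₀)
  have hcle : ∀ x ∈ KK m, c ≤ ‖F x‖ := by
    intro x hx; rw [hcdef]; exact hmin hx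
  have huc := KK_compact.uniformContinuousOn_of_continuous hc.continuousOn
  rw [Metric.uniformContinuousOn_iff] at huc
  obtain ⟨δ, hδ, hd⟩ := huc c hcpos
  let G : (Fin (m + 1) → ℝ) → ℕ → ℝ := fun x i => if h : i < m then F x ⟨i, h⟩ else 0
  have hGneg : ∀ x i, G (-x) i = - G x i := by
    intro x i
    simp only [G]
    split_ifs <;> simp [hodd]
  let idx : (Fin (m + 1) → ℝ) → ℕ := fun x => Classical.epsilon (fun i => c ≤ |G x i|)
  have hidx : ∀ x ∈ KK m, c ≤ |G x (idx x)| := by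
    intro x hx
    apply Classical.epsilon_spec (p := fun i => c ≤ |G x i|)
    by_contra! hlt
    have := hcle x hx
    rw [← not_lt] at this
    apply this
    rw [pi_norm_lt_iff hcpos]
    intro i
    have := hlt i
    simpa [G] using this
  have hidxm : ∀ x ∈ KK m, idx x < m := by
    intro x hx
    by_contra h
    have := hidx x hx
    simp only [G, dif_neg h, abs_zero] at this
    linarith
  have hidxneg : ∀ x, idx (-x) = idx x := by
    intro x
    simp only [idx, hGneg, abs_neg]
  let lab : (Fin (m + 1) → ℝ) → ℕ := fun x => 2 * idx x + if 0 < G x (idx x) then 1 else 0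
  apply tucker lab δ hδ
  · intro x hx
    have := hidxm x hx
    simp only [lab]
    split_ifs <;> omega
  · intro x hx
    have := hidx x hx
    simp only [lab, hidxneg, hGneg, flip]
    rcases lt_trichotomy (G x (idx x)) 0 with h | h | h
    · have h' : ¬ (0 < G x (idx x)) := by linarith
      simp [h, h']
    · rw [h] at this; simp at this; linarith
    · have h' : ¬ (G x (idx x) < 0) := by linarith
      simp [h, h', Nat.add_mod]
  · intro x hx y hy hxy hl
    have hi : idx x = idx y := by
      simp only [lab] at hl
      split_ifs at hl <;> omega
    have a1 := hidx x hx
    have a2 := hidx y hy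
    have hm := hidxm y hy
    have a3 := hd x hx y hy hxy
    rw [dist_pi_lt_iff hcpos] at a3
    have a4 := a3 ⟨idx y, hm⟩
    simp only [lab]
    rw [hi] at a1 ⊢
    have hGx : G x (idx y) = F x ⟨idx y, hm⟩ := by simp [G, hm]
    have hGy : G y (idx y) = F y ⟨idx y, hm⟩ := by simp [G, hm]
    rw [hGx] at a1 ⊢
    rw [hGy] at a2 ⊢
    rw [Real.dist_eq, abs_lt] at a4
    rw [le_abs] at a1 a2
    congr 1
    split_ifs <;> first | rfl | (exfalso; rcases a1 with a1 | a1 <;> rcases a2 with a2 | a2 <;> linarith)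

end
end BU

namespace BU

open scoped Pointwise in
lemma dirWidth_smul {n : ℕ} (K : Set (EuclideanSpace ℝ (Fin n))) (c : ℝ) (hc : 0 ≤ c)
    (v : EuclideanSpace ℝ (Fin n)) : dirWidth K (c • v) = c * dirWidth K v := by
  unfold dirWidth
  have : (fun x => ⟪x, c • v⟫) '' K = c • ((fun x => ⟪x, v⟫) '' K) := by
    rw [← Set.image_smul, Set.image_image]
    simp [inner_smul_right]
  rw [this, Real.sSup_smul_of_nonneg hc, Real.sInf_smul_of_nonneg hc, smul_eq_mul, smul_eq_mul]
  ring

lemma dirWidth_cont {n : ℕ} (K : Set (EuclideanSpace ℝ (Fin n))) (hK : IsCompact K) :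
    Continuous (dirWidth K) := by
  unfold dirWidth
  apply Continuous.sub
  · exact hK.continuous_sSup (f := fun v x => ⟪x, v⟫) (by fun_prop)
  · exact hK.continuous_sInf (f := fun v x => ⟪x, v⟫) (by fun_prop)

lemma stage {n m : ℕ} (K : Fin m → Set (EuclideanSpace ℝ (Fin n)))
    (hcpt : ∀ i, IsCompact (K i)) (T : Finset (EuclideanSpace ℝ (Fin n)))
    (hT : T.card + m + 2 ≤ n) :
    ∃ a b : EuclideanSpace ℝ (Fin n), ‖a‖ = 1 ∧ ‖b‖ = 1 ∧ ⟪a, b⟫ = 0 ∧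
      (∀ t ∈ T, ⟪t, a⟫ = 0 ∧ ⟪t, b⟫ = 0) ∧ ∀ i, dirWidth (K i) a = dirWidth (K i) b := by
  obtain ⟨W, hWdef⟩ : ∃ W, W = (Submodule.span ℝ (T : Set (EuclideanSpace ℝ (Fin n))))ᗮ := ⟨_, rfl⟩
  have hW : m + 2 ≤ Module.finrank ℝ W := by
    have h1 := Submodule.finrank_add_finrank_orthogonal
      (Submodule.span ℝ (T : Set (EuclideanSpace ℝ (Fin n))))
    have h2 := finrank_span_finset_le_card (R := ℝ) T
    rw [finrank_euclideanSpace_fin] at h1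
    rw [hWdef]
    simp only [Set.finrank] at h2
    omega
  have hWT : ∀ t ∈ T, ∀ a ∈ W, ⟪t, a⟫ = 0 := by
    intro t ht a ha
    rw [hWdef, Submodule.mem_orthogonal] at ha
    exact ha t (Submodule.subset_span ht)
  let B := stdOrthonormalBasis ℝ W
  let f : Fin (m + 2) → EuclideanSpace ℝ (Fin n) := fun i => (B (Fin.castLE hW i) : _)
  have hfW : ∀ i, f i ∈ W := fun i => (B (Fin.castLE hW i)).2
  have hf : Orthonormal ℝ f := by
    have h1 : Orthonormal ℝ (fun i => (B i : EuclideanSpace ℝ (Fin n))) :=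
      B.orthonormal.comp_linearIsometry W.subtypeₗᵢ
    exact h1.comp _ (Fin.castLE_injective hW)
  let w : (Fin (m + 1) → ℝ) → EuclideanSpace ℝ (Fin n) := fun x => ∑ j, x j • f j.succ
  have hwc : Continuous w := by fun_prop
  have hwneg : ∀ x, w (-x) = - w x := by
    intro x; simp [w, Finset.sum_neg_distrib]
  have huw : ∀ x, ⟪f 0, w x⟫ = 0 := by
    intro x
    simp only [w, inner_sum, inner_smul_right]
    apply Finset.sum_eq_zero
    intro j _
    rw [hf.2 (Fin.succ_ne_zero j).symm, mul_zero]
  have hw0 : ∀ x, w x = 0 → x = 0 := by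
    intro x hx
    have hli := (hf.comp _ (Fin.succ_injective (m + 1))).linearIndependent
    rw [Fintype.linearIndependent_iff] at hli
    funext j
    exact hli x hx j
  have hwW : ∀ x, w x ∈ W := fun x => W.sum_mem (fun j _ => W.smul_mem _ (hfW _))
  obtain ⟨x, hx0, hx⟩ := borsuk_ulam (m := m)
    (fun x i => dirWidth (K i) (‖w x‖ • f 0 + w x) - dirWidth (K i) (‖w x‖ • f 0 - w x))
    (by
      apply continuous_pi
      intro i
      have := dirWidth_cont (K i) (hcpt i)
      fun_prop)
    (by
      intro x
      funext i
      simp only [hwneg, norm_neg, Pi.neg_apply, sub_neg_eq_add, ← sub_eq_add_neg]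
      ring)
  have hwx : w x ≠ 0 := fun h => hx0 (hw0 x h)
  have hN : 0 < ‖w x‖ := norm_pos_iff.mpr hwx
  have hu : ‖f 0‖ = 1 := hf.1 0
  have huw' := huw x
  have hwu' : ⟪w x, f 0⟫ = 0 := by rw [real_inner_comm]; exact huw'
  have hn1 : ‖‖w x‖ • f 0 + w x‖ ^ 2 = 2 * ‖w x‖ ^ 2 := by
    rw [norm_add_sq_real, inner_smul_left, huw', norm_smul, hu, norm_norm]; simp; ring
  have hn2 : ‖‖w x‖ • f 0 - w x‖ ^ 2 = 2 * ‖w x‖ ^ 2 := by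
    rw [norm_sub_sq_real, inner_smul_left, huw', norm_smul, hu, norm_norm]; simp; ring
  have hin : ⟪‖w x‖ • f 0 + w x, ‖w x‖ • f 0 - w x⟫ = 0 := by
    simp only [inner_add_left, inner_sub_right, inner_smul_left, inner_smul_right, huw', hwu',
      real_inner_self_eq_norm_sq, hu]
    simp; ring
  have hs : 0 < Real.sqrt 2 * ‖w x‖ := by positivity
  have hsq : (Real.sqrt 2 * ‖w x‖) ^ 2 = 2 * ‖w x‖ ^ 2 := by
    rw [mul_pow, Real.sq_sqrt (by norm_num)]
  have hn1' : ‖‖w x‖ • f 0 + w x‖ = Real.sqrt 2 * ‖w x‖ :=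
    (sq_eq_sq₀ (norm_nonneg _) hs.le).mp (by rw [hn1, hsq])
  have hn2' : ‖‖w x‖ • f 0 - w x‖ = Real.sqrt 2 * ‖w x‖ :=
    (sq_eq_sq₀ (norm_nonneg _) hs.le).mp (by rw [hn2, hsq])
  generalize Real.sqrt 2 * ‖w x‖ = c at *
  refine ⟨c⁻¹ • (‖w x‖ • f 0 + w x), c⁻¹ • (‖w x‖ • f 0 - w x), ?_, ?_, ?_, ?_, ?_⟩
  · rw [norm_smul, hn1', Real.norm_of_nonneg (by positivity), inv_mul_cancel₀ hs.ne']
  · rw [norm_smul, hn2', Real.norm_of_nonneg (by positivity), inv_mul_cancel₀ hs.ne']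
  · rw [inner_smul_left, inner_smul_right, hin]; simp
  · intro t ht
    exact ⟨hWT t ht _ (W.smul_mem _ (W.add_mem (W.smul_mem _ (hfW 0)) (hwW x))),
      hWT t ht _ (W.smul_mem _ (W.sub_mem (W.smul_mem _ (hfW 0)) (hwW x)))⟩
  · intro i
    rw [dirWidth_smul _ _ (by positivity), dirWidth_smul _ _ (by positivity)]
    have := congrFun hx i
    simp only [Pi.zero_apply] at this
    rw [sub_eq_zero.mp this]

end BU

/-- Given `⌊(n - r_n - 1)/3⌋` nonempty compact convex regions in `ℝⁿ` (`n ≥ 6`),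
there exist pairwise orthogonal unit vectors `v₁, …, v₆` such that each region has
equal widths in directions `v₁, v₂`, in directions `v₃, v₄`, and in directions
`v₅, v₆`. -/
theorem squares_inscribe_three (n : ℕ) (hn : 6 ≤ n)
    (K : Fin ((n - flipStiefelR n - 1) / 3) → Set (EuclideanSpace ℝ (Fin n)))
    (hne : ∀ i, (K i).Nonempty) (hcpt : ∀ i, IsCompact (K i))
    (hconv : ∀ i, Convex ℝ (K i)) :
    ∃ v : Fin 6 → EuclideanSpace ℝ (Fin n),
      (∀ i, ‖v i‖ = 1) ∧
      (∀ i j : Fin 6, i ≠ j → ⟪v i, v j⟫ = 0) ∧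
      ∀ i, dirWidth (K i) (v 0) = dirWidth (K i) (v 1) ∧
           dirWidth (K i) (v 2) = dirWidth (K i) (v 3) ∧
           dirWidth (K i) (v 4) = dirWidth (K i) (v 5) := by
  classical
  have hm : (n - flipStiefelR n - 1) / 3 + 6 ≤ n := by
    unfold flipStiefelR
    split_ifs <;> omega
  obtain ⟨a, b, ha, hb, hab, -, h1⟩ := BU.stage K hcpt ∅ (by simp; omega)
  have c2 : ({a, b} : Finset (EuclideanSpace ℝ (Fin n))).card ≤ 2 := Finset.card_le_two
  obtain ⟨c, d, hc, hd, hcd, hT2, h2⟩ := BU.stage K hcpt {a, b} (by omega)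
  have c4 : ({a, b, c, d} : Finset (EuclideanSpace ℝ (Fin n))).card ≤ 4 := Finset.card_le_four
  obtain ⟨e, f, he, hf, hef, hT4, h3⟩ := BU.stage K hcpt {a, b, c, d} (by omega)
  obtain ⟨hac, had⟩ := hT2 a (by simp)
  obtain ⟨hbc, hbd⟩ := hT2 b (by simp)
  obtain ⟨hae, haf⟩ := hT4 a (by simp)
  obtain ⟨hbe, hbf⟩ := hT4 b (by simp)
  obtain ⟨hce, hcf⟩ := hT4 c (by simp)
  obtain ⟨hde, hdf⟩ := hT4 d (by simp)
  refine ⟨![a, b, c, d, e, f], ?_, ?_, fun i => ⟨h1 i, h2 i, h3 i⟩⟩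
  · intro i
    fin_cases i <;> assumption
  · intro i j hij
    fin_cases i <;> fin_cases j <;>
      first
      | exact absurd rfl hij
      | assumption
      | (rw [real_inner_comm]; assumption)
end

section
/- Let n = 2^r − 1 for some r > 0 and let 1 < 2k ≤ n. There is no continuous C_2-equivariant map f : S^{n-1} → V_{n,2k}, where C_2 acts on the sphere S^{n-1} by the antipodal action a · v = −v and on V_{n,2k} by the flip action. -/
/-- The index flip on `Fin (2k)`: swaps `2i ↔ 2i + 1`. -/
def finFlip {k : ℕ} (i : Fin (2 * k)) : Fin (2 * k) :=
  ⟨if i.1 % 2 = 0 then i.1 + 1 else i.1 - 1, by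
    rcases i with ⟨v, hv⟩
    dsimp only
    split <;> omega⟩

lemma finFlip_involutive {k : ℕ} : Function.Involutive (finFlip (k := k)) := by
  intro i
  rcases i with ⟨v, hv⟩
  apply Fin.ext
  simp only [finFlip]
  split_ifs <;> omega

lemma finFlip_injective {k : ℕ} : Function.Injective (finFlip (k := k)) :=
  finFlip_involutive.injective

/-- The real Stiefel manifold `V_{n,m}` of orthonormal `m`-frames in `ℝⁿ`. -/
abbrev Stiefel (n m : ℕ) : Type :=
  { v : Fin m → EuclideanSpace ℝ (Fin n) // Orthonormal ℝ v }

/-- The flip involution on `V_{n,2k}`: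
`(v₁, v₂, …, v_{2k}) ↦ (v₂, v₁, …, v_{2k}, v_{2k-1})`. -/
def flipFrame {n k : ℕ} (v : Stiefel n (2 * k)) : Stiefel n (2 * k) :=
  ⟨v.1 ∘ finFlip, v.2.comp finFlip finFlip_injective⟩

/-- The antipodal involution on `V_{n,m}`: `(v₁, …, v_m) ↦ (−v₁, …, −v_m)`. -/
def negFrame {n m : ℕ} (v : Stiefel n m) : Stiefel n m :=
  ⟨fun i => -(v.1 i), by
    have h2 := v.2
    rw [orthonormal_iff_ite] at h2 ⊢
    intro i j
    simpa [inner_neg_neg] using h2 i j⟩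


namespace FlipBU

abbrev Chain (E : Type*) := List E →₀ ZMod 2

noncomputable section

variable {E F M : Type*} [AddCommGroup M] [Module (ZMod 2) M]

def ext (f : List E → M) : Chain E →ₗ[ZMod 2] M := Finsupp.linearCombination (ZMod 2) f

def of (l : List E) : Chain E := Finsupp.single l 1

@[simp] lemma ext_of (f : List E → M) (l : List E) : ext f (of l) = f l := by
  simp [ext, of]

lemma chain_hom {f g : Chain E →ₗ[ZMod 2] M} (h : ∀ l, f (of l) = g (of l)) (c : Chain E) :
    f c = g c := by
  have : f = g := Finsupp.lhom_ext' fun l => LinearMap.ext_ring (h l)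
  rw [this]

lemma add_self_chain (c : Chain E) : c + c = 0 := by
  ext l
  exact CharTwo.add_self_eq_zero _

def cone (p : E) : Chain E →ₗ[ZMod 2] Chain E := ext fun l => of (p :: l)

@[simp] lemma cone_of (p : E) (l : List E) : cone p (of l) = of (p :: l) := by simp [cone]

def bdL : List E → Chain E
  | [] => 0
  | p :: l => of l + cone p (bdL l)

def bd : Chain E →ₗ[ZMod 2] Chain E := ext bdL

@[simp] lemma bd_of (l : List E) : bd (of l) = bdL l := by simp [bd]

lemma bd_cone (p : E) (c : Chain E) : bd (cone p c) = c + cone p (bd c) := by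
  refine chain_hom (f := bd ∘ₗ cone p) (g := LinearMap.id + cone p ∘ₗ bd) (fun l => ?_) c
  simp [bdL]

lemma bd_bdL (l : List E) : bd (bdL l) = 0 := by
  induction l with
  | nil => simp [bdL]
  | cons p l ih => simp [bdL, bd_cone, ih, add_self_chain]

lemma bd_bd (c : Chain E) : bd (bd c) = 0 := by
  refine chain_hom (f := bd ∘ₗ bd) (g := 0) (fun l => ?_) c
  simp [bd_bdL]

def mapC (φ : E → F) : Chain E →ₗ[ZMod 2] Chain F := ext fun l => of (l.map φ)

@[simp] lemma mapC_of (φ : E → F) (l : List E) : mapC φ (of l) = of (l.map φ) := by simp [mapC]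

lemma mapC_cone (φ : E → F) (p : E) (c : Chain E) :
    mapC φ (cone p c) = cone (φ p) (mapC φ c) := by
  refine chain_hom (f := mapC φ ∘ₗ cone p) (g := cone (φ p) ∘ₗ mapC φ) (fun l => ?_) c
  simp

lemma mapC_bdL (φ : E → F) (l : List E) : mapC φ (bdL l) = bdL (l.map φ) := by
  induction l with
  | nil => simp [bdL]
  | cons p l ih => simp [bdL, mapC_cone, ih]

lemma mapC_bd (φ : E → F) (c : Chain E) : mapC φ (bd c) = bd (mapC φ c) := by
  refine chain_hom (f := mapC φ ∘ₗ bd) (g := bd ∘ₗ mapC φ) (fun l => ?_) c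
  simp [mapC_bdL]

lemma mapC_mapC {G : Type*} (φ : E → F) (ψ : F → G) (c : Chain E) :
    mapC ψ (mapC φ c) = mapC (ψ ∘ φ) c := by
  refine chain_hom (f := mapC ψ ∘ₗ mapC φ) (g := mapC (ψ ∘ φ)) (fun l => ?_) c
  simp

lemma ext_cone (f : List E → M) (p : E) (c : Chain E) :
    ext f (cone p c) = ext (fun l => f (p :: l)) c := by
  refine chain_hom (f := ext f ∘ₗ cone p) (g := ext (fun l => f (p :: l))) (fun l => ?_) c
  simp

lemma ext_mapC (f : List F → M) (φ : E → F) (c : Chain E) :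
    ext f (mapC φ c) = ext (fun l => f (l.map φ)) c := by
  refine chain_hom (f := ext f ∘ₗ mapC φ) (g := ext (fun l => f (l.map φ))) (fun l => ?_) c
  simp

/-! ### support predicates -/

def Sup (P : List E → Prop) : Submodule (ZMod 2) (Chain E) :=
  Submodule.span (ZMod 2) (of '' {l | P l})

lemma of_mem_Sup {P : List E → Prop} {l : List E} (h : P l) : of l ∈ Sup P :=
  Submodule.subset_span ⟨l, h, rfl⟩

lemma map_Sup {P : List E → Prop} {Q : Submodule (ZMod 2) M} (f : Chain E →ₗ[ZMod 2] M)
    (h : ∀ l, P l → f (of l) ∈ Q) {c : Chain E} (hc : c ∈ Sup P) : f c ∈ Q := by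
  have : Sup P ≤ Q.comap f := by
    rw [Sup, Submodule.span_le]
    rintro _ ⟨l, hl, rfl⟩
    exact h l hl
  exact this hc

lemma eqOn_Sup {P : List E → Prop} (f g : Chain E →ₗ[ZMod 2] M)
    (h : ∀ l, P l → f (of l) = g (of l)) {c : Chain E} (hc : c ∈ Sup P) : f c = g c := by
  have := map_Sup (Q := ⊥) (f - g) (fun l hl => by simp [h l hl]) hc
  simpa [sub_eq_zero] using this

lemma Sup_mono {P Q : List E → Prop} (h : ∀ l, P l → Q l) {c : Chain E} (hc : c ∈ Sup P) :
    c ∈ Sup Q :=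
  map_Sup (Q := Sup Q) LinearMap.id (fun l hl => of_mem_Sup (h l hl)) hc

lemma bdL_Sup (l : List E) :
    bdL l ∈ Sup (fun l' => l'.length + 1 = l.length ∧ ∀ p ∈ l', p ∈ l) := by
  induction l with
  | nil => simp [bdL]
  | cons p l ih =>
    refine Submodule.add_mem _ (of_mem_Sup ⟨by simp, by simp +contextual⟩) ?_
    refine map_Sup (cone p) (fun l' hl' => ?_) ih
    rw [cone_of]
    refine of_mem_Sup ⟨by simp [hl'.1], ?_⟩
    intro q hq
    rcases List.mem_cons.1 hq with rfl | hq
    · simp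
    · exact List.mem_cons_of_mem _ (hl'.2 q hq)

/-! ### alternating cochains -/

def alt : Bool → List ℕ → ZMod 2
  | _, [] => 1
  | b, x :: l => if (x % 2 == 1) = b then alt (!b) l else 0

lemma alt_bdL (b : Bool) (l : List ℕ) : ext (alt b) (bdL l) = alt b l + alt (!b) l := by
  induction l generalizing b with
  | nil => simp [bdL, alt]; rfl
  | cons p l ih =>
    simp only [bdL, map_add, ext_of, ext_cone, alt]
    by_cases h : (p % 2 == 1) = b
    · have h' : ¬ (p % 2 == 1) = !b := by rw [h]; simp
      simp only [h, if_true, ih, Bool.not_not]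
      have := CharTwo.add_self_eq_zero (alt b l)
      simp
      linear_combination this
    · have h' : (p % 2 == 1) = !b := by
        cases b <;> simp_all
      have h0 : ext (fun _ : List ℕ => (0 : ZMod 2)) (bdL l) = 0 :=
        chain_hom (f := ext (fun _ : List ℕ => (0 : ZMod 2))) (g := 0) (fun l => by simp) _
      have hb : ¬ (!b) = b := by cases b <;> simp
      simp only [h', hb, if_true, if_false, h0]
      simp

lemma perm_bdL {G : List E → ZMod 2} (hG : ∀ l l', l.Perm l' → G l = G l') {l l' : List E}
    (h : l.Perm l') : ext G (bdL l) = ext G (bdL l') := by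
  induction h generalizing G with
  | nil => rfl
  | cons x h ih =>
    simp only [bdL, map_add, ext_of, ext_cone]
    rw [hG _ _ h, ih (G := fun l => G (x :: l)) (fun a b hab => hG _ _ (hab.cons x))]
  | swap x y l =>
    simp only [bdL, map_add, ext_of, ext_cone]
    have : (fun l => G (y :: x :: l)) = (fun l => G (x :: y :: l)) := by
      funext l; exact hG _ _ (List.Perm.swap _ _ _)
    rw [this]; ring
  | trans _ _ ih1 ih2 => rw [ih1 hG, ih2 hG]

def srt (l : List ℕ) : List ℕ := l.insertionSort (· ≤ ·)

lemma srt_perm (l : List ℕ) : (srt l).Perm l := List.perm_insertionSort _ _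

lemma srt_sorted (l : List ℕ) : (srt l).Pairwise (· ≤ ·) := List.pairwise_insertionSort _ _

lemma srt_unique {l l' : List ℕ} (h : l.Perm l') (hs : l'.Pairwise (· ≤ ·)) : srt l = l' :=
  List.Perm.eq_of_pairwise (fun _ _ _ _ => le_antisymm) (srt_sorted l) hs ((srt_perm l).trans h)

def A (lam : E → ℕ) (b : Bool) : Chain E →ₗ[ZMod 2] ZMod 2 :=
  ext fun l => alt b (srt (l.map lam))

lemma A_bd (lam : E → ℕ) (b : Bool) (c : Chain E) :
    A lam b (bd c) = A lam b c + A lam (!b) c := by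
  refine chain_hom (f := A lam b ∘ₗ bd) (g := A lam b + A lam (!b)) (fun l => ?_) c
  have h1 : A lam b (bdL l) = ext (fun l => alt b (srt l)) (mapC lam (bdL l)) := by
    rw [ext_mapC]; rfl
  have hG : ∀ l l' : List ℕ, l.Perm l' → alt b (srt l) = alt b (srt l') := by
    intro l l' h
    rw [srt_unique (h.trans (srt_perm l').symm) (srt_sorted l')]
  have h2 := perm_bdL (G := fun l => alt b (srt l)) hG (srt_perm (l.map lam)).symm
  have h3 : ext (fun l => alt b (srt l)) (bdL (srt (l.map lam))) =
      ext (alt b) (bdL (srt (l.map lam))) := by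
    have key : ∀ l : List ℕ, l.Pairwise (· ≤ ·) →
        bdL l ∈ Sup (fun l' : List ℕ => l'.Sublist l) := by
      intro l _
      induction l with
      | nil => simp [bdL]
      | cons p l ih =>
        refine Submodule.add_mem _ (of_mem_Sup (List.sublist_cons_self _ _)) ?_
        refine map_Sup (cone p) (fun l' hl' => ?_) (ih (by simp_all))
        rw [cone_of]
        exact of_mem_Sup (hl'.cons_cons p)
    refine eqOn_Sup _ _ (fun l' hl' => ?_) (key _ (srt_sorted (l.map lam)))
    simp only [ext_of]
    rw [srt_unique (List.Perm.refl _) ((srt_sorted (l.map lam)).sublist hl')]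
  simp only [LinearMap.comp_apply, bd_of, LinearMap.add_apply]
  rw [h1, mapC_bdL, h2, h3, alt_bdL]
  simp [A]

def NC (l : List ℕ) : Prop := ∀ x ∈ l, ∀ y ∈ l, x / 2 = y / 2 → x = y

lemma alt_short {n : ℕ} (l : List ℕ) (hs : l.Pairwise (· ≤ ·)) (hnc : NC l)
    (hn : ∀ x ∈ l, x < 2 * n) (b : Bool) (h : alt b l ≠ 0) (m : ℕ) (hmn : m ≤ n)
    (hm : ∀ x ∈ l, m ≤ x / 2) : l.length + m ≤ n := by
  induction l generalizing b m with
  | nil => simpa using hmn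
  | cons x l ih =>
    have hx := hn x (by simp)
    have hmx := hm x (by simp)
    simp only [alt] at h
    split_ifs at h with hb
    · have := ih (List.pairwise_cons.1 hs).2
        (fun y hy z hz => hnc y (List.mem_cons_of_mem _ hy) z (List.mem_cons_of_mem _ hz))
        (fun y hy => hn y (List.mem_cons_of_mem _ hy)) (!b) h (m + 1) (by omega) ?_
      · simp; omega
      · cases l with
        | nil => simp
        | cons y l =>
          simp only [alt] at h
          split_ifs at h with hb'
          · have hxy : x ≠ y := by
              rintro rfl
              rw [hb] at hb'; cases b <;> simp at hb'
            have h1 : x / 2 ≠ y / 2 := fun e => hxy (hnc x (by simp) y (by simp) e)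
            have h2 : x ≤ y := (List.pairwise_cons.1 hs).1 y (by simp)
            intro z hz
            have h3 : y ≤ z := by
              rcases List.mem_cons.1 hz with rfl | hz
              · exact le_rfl
              · exact (List.pairwise_cons.1 (List.pairwise_cons.1 hs).2).1 z hz
            omega
          · exact absurd rfl h
    · exact absurd rfl h

def nl (x : ℕ) : ℕ := if x % 2 = 0 then x + 1 else x - 1

lemma alt_nl (b : Bool) (l : List ℕ) : alt b (l.map nl) = alt (!b) l := by
  induction l generalizing b with
  | nil => rfl
  | cons x l ih =>
    simp only [List.map_cons, alt, ih]
    have : (nl x % 2 == 1) = !(x % 2 == 1) := by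
      unfold nl
      rcases Nat.mod_two_eq_zero_or_one x with h | h
      · have : (x + 1) % 2 = 1 := by omega
        simp [h, this]
      · have : (x - 1) % 2 = 0 := by omega
        simp [h, this]
    rw [this]
    congr 1
    cases b <;> simp

lemma srt_nl {l : List ℕ} (h : NC l) : srt (l.map nl) = (srt l).map nl := by
  refine srt_unique ((srt_perm l).map nl).symm ?_
  rw [List.pairwise_map]
  refine (srt_sorted l).imp_of_mem ?_
  intro x y hx hy hxy
  by_cases e : x = y
  · rw [e]
  · have h1 : x / 2 ≠ y / 2 := fun e' =>
      e (h x ((srt_perm l).subset hx) y ((srt_perm l).subset hy) e')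
    unfold nl
    split_ifs <;> omega

/-! ### subdivision -/

section sd
variable {E F : Type*} [NormedAddCommGroup E] [NormedSpace ℝ E]
  [NormedAddCommGroup F] [NormedSpace ℝ F]

def bary (l : List E) : E := (l.length : ℝ)⁻¹ • l.sum

def Sd : ℕ → Chain E →ₗ[ZMod 2] Chain E
  | 0 => LinearMap.id
  | k + 1 => ext fun l => cone (bary l) (Sd k (bdL l))

lemma Sd_succ_of (k : ℕ) (l : List E) :
    Sd (k + 1) (of l) = cone (bary l) (Sd k (bdL l)) := by simp [Sd]

lemma Sd_zero (c : Chain E) : Sd 0 c = c := by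
  rw [Sd, LinearMap.id_apply]

lemma bd_Sd (k : ℕ) (c : Chain E) : bd (Sd (k + 1) c) = Sd k (bd c) := by
  induction k generalizing c with
  | zero =>
    rw [Sd_zero]
    have := chain_hom (f := bd.comp (Sd (0 + 1))) (g := bd (E := E)) (fun l => by
      rw [LinearMap.comp_apply, Sd_succ_of, bd_cone, Sd_zero, bd_of, bd_bdL, map_zero, add_zero]) c
    rwa [LinearMap.comp_apply] at this
  | succ k ih =>
    have := chain_hom (f := bd.comp (Sd (k + 1 + 1))) (g := (Sd (k + 1)).comp (bd (E := E)))
      (fun l => by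
        rw [LinearMap.comp_apply, Sd_succ_of, bd_cone, ih, LinearMap.comp_apply, bd_of, bd_bdL,
          map_zero, map_zero, add_zero]) c
    rwa [LinearMap.comp_apply, LinearMap.comp_apply] at this

lemma bary_map (φ : E →ₗ[ℝ] F) (l : List E) : bary (l.map φ) = φ (bary l) := by
  simp [bary, map_list_sum]

lemma mapC_Sd (φ : E →ₗ[ℝ] F) (k : ℕ) (c : Chain E) :
    mapC φ (Sd k c) = Sd k (mapC φ c) := by
  induction k generalizing c with
  | zero => rfl
  | succ k ih =>
    refine chain_hom (f := mapC φ ∘ₗ Sd (k + 1)) (g := Sd (k + 1) ∘ₗ mapC φ) (fun l => ?_) c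
    simp only [LinearMap.comp_apply, mapC_of, Sd_succ_of]
    rw [mapC_cone, ih, mapC_bdL, bary_map]

def Fine (k : ℕ) (C : Set E) (D : ℝ) (l : List E) : Prop :=
  l.length = k ∧ (∀ p ∈ l, p ∈ C) ∧ ∀ p ∈ l, ∀ q ∈ l, dist p q ≤ D

lemma list_sum_norm_le (l : List E) (D : ℝ) (h : ∀ p ∈ l, ‖p‖ ≤ D) :
    ‖l.sum‖ ≤ l.length * D := by
  induction l with
  | nil => simp
  | cons x l ih =>
    have h1 := h x (by simp)
    have h2 := ih (fun p hp => h p (List.mem_cons_of_mem _ hp))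
    have := norm_add_le x l.sum
    simp only [List.sum_cons, List.length_cons]
    push_cast
    linarith

lemma list_sum_norm_le' (l : List E) (D : ℝ) (h : ∀ p ∈ l, ‖p‖ ≤ D) (h0 : (0 : E) ∈ l) :
    ‖l.sum‖ ≤ (l.length - 1) * D := by
  obtain ⟨s, t, rfl⟩ := List.append_of_mem h0
  have := list_sum_norm_le (s ++ t) D (fun p hp => h p (by
    simp only [List.mem_append, List.mem_cons] at hp ⊢; tauto))
  simp only [List.sum_append, List.sum_cons, zero_add, List.length_append, List.length_cons] at this ⊢
  push_cast at this ⊢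
  linarith

lemma sum_sub_const (l : List E) (q : E) :
    (l.map (fun p => p - q)).sum = l.sum - (l.length : ℝ) • q := by
  induction l with
  | nil => simp
  | cons x l ih => simp [ih, add_smul]; abel

lemma bary_dist {N : ℕ} {D : ℝ} (hD : 0 ≤ D) {l : List E} (hl : l.length ≤ N)
    (h : ∀ p ∈ l, ∀ q ∈ l, dist p q ≤ D) {q : E} (hq : q ∈ l) :
    dist q (bary l) ≤ (1 - (N : ℝ)⁻¹) * D := by
  have hpos : 0 < l.length := List.length_pos_of_mem hq
  have hpos' : (0 : ℝ) < l.length := by exact_mod_cast hpos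
  have e : bary l - q = (l.length : ℝ)⁻¹ • (l.map (fun p => p - q)).sum := by
    rw [sum_sub_const, smul_sub, smul_smul, inv_mul_cancel₀ hpos'.ne', one_smul, bary]
  have b := list_sum_norm_le' (l.map (fun p => p - q)) D (by
    intro p hp
    obtain ⟨p', hp', rfl⟩ := List.mem_map.1 hp
    rw [← dist_eq_norm]; exact h p' hp' q hq) (List.mem_map.2 ⟨q, hq, sub_self q⟩)
  rw [dist_comm, dist_eq_norm, e, norm_smul, norm_inv, Real.norm_natCast]
  rw [List.length_map] at b
  have h1 : (l.length : ℝ)⁻¹ * ‖(l.map (fun p => p - q)).sum‖ ≤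
      (l.length : ℝ)⁻¹ * (((l.length : ℝ) - 1) * D) := by gcongr
  have h2 : (l.length : ℝ)⁻¹ * (((l.length : ℝ) - 1) * D) = (1 - (l.length : ℝ)⁻¹) * D := by
    field_simp
  have h3 : (N : ℝ)⁻¹ ≤ (l.length : ℝ)⁻¹ := by
    gcongr
  rw [h2] at h1
  refine h1.trans ?_
  gcongr

lemma bary_mem {C : Set E} (hC : Convex ℝ C) {l : List E} (hl : l ≠ []) (h : ∀ p ∈ l, p ∈ C) :
    bary l ∈ C := by
  have hpos : 0 < l.length := List.length_pos_of_ne_nil hl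
  have hpos' : (0 : ℝ) < l.length := by exact_mod_cast hpos
  have : bary l = ∑ i : Fin l.length, (l.length : ℝ)⁻¹ • l.get i := by
    rw [← Finset.smul_sum, bary]
    congr 1
    simp [Fin.sum_univ_getElem]
  rw [this]
  refine hC.sum_mem (fun i _ => by positivity) ?_ (fun i _ => h _ (List.get_mem _ _))
  simp [hpos'.ne']

lemma Sd_fine {N : ℕ} {D : ℝ} (hD : 0 ≤ D) (k : ℕ) (hk : k ≤ N) {C : Set E}
    (hC : Convex ℝ C) {l : List E} (hl : Fine k C D l) :
    Sd k (of l) ∈ Sup (Fine k C ((1 - (N : ℝ)⁻¹) * D)) := by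
  induction k generalizing C l with
  | zero =>
    refine of_mem_Sup ?_
    have := List.length_eq_zero_iff.1 hl.1
    subst this
    simp [Fine]
  | succ k ih =>
    have hne : l ≠ [] := by rintro rfl; simp [Fine] at hl
    set R := (1 - (N : ℝ)⁻¹) * D with hR
    have hR0 : 0 ≤ R := by
      have : (N : ℝ)⁻¹ ≤ 1 := by
        apply inv_le_one_of_one_le₀; exact_mod_cast (by omega : 1 ≤ N)
      exact mul_nonneg (by linarith) hD
    rw [Sd_succ_of]
    have hC' : Convex ℝ (C ∩ Metric.closedBall (bary l) R) :=
      hC.inter (convex_closedBall _ _)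
    have hbl := map_Sup (Q := Sup (Fine k (C ∩ Metric.closedBall (bary l) R) R)) (Sd k)
      (fun l' hl' => ih (by omega) hC' (l := l') ⟨by have := hl'.1; have := hl.1; omega,
        fun p hp => ⟨hl.2.1 p (hl'.2 p hp), bary_dist hD (by rw [hl.1]; exact hk) hl.2.2 (hl'.2 p hp)⟩,
        fun p hp q hq => hl.2.2 p (hl'.2 p hp) q (hl'.2 q hq)⟩) (bdL_Sup l)
    refine map_Sup (cone (bary l)) (fun l' hl' => ?_) hbl
    rw [cone_of]
    refine of_mem_Sup ⟨by simp [hl'.1], ?_, ?_⟩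
    · intro p hp
      rcases List.mem_cons.1 hp with rfl | hp
      · exact bary_mem hC hne hl.2.1
      · exact (hl'.2.1 p hp).1
    · intro p hp q hq
      rcases List.mem_cons.1 hp with rfl | hp <;> rcases List.mem_cons.1 hq with rfl | hq
      · simpa using hR0
      · rw [dist_comm]; exact (hl'.2.1 q hq).2
      · exact (hl'.2.1 p hp).2
      · exact hl'.2.2 p hp q hq

def FineK (k : ℕ) (K : Set E) (D : ℝ) (l : List E) : Prop :=
  ∃ C : Set E, Convex ℝ C ∧ C ⊆ K ∧ Fine k C D l

def SdN (k j : ℕ) : Chain E →ₗ[ZMod 2] Chain E := (Sd k) ^ j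

lemma SdN_succ (k j : ℕ) (c : Chain E) : SdN k (j + 1) c = Sd k (SdN k j c) := by
  simp [SdN, pow_succ']

lemma SdN_zero_left (j : ℕ) (c : Chain E) : SdN 0 j c = c := by
  induction j with
  | zero => rfl
  | succ j ih => rw [SdN_succ, ih]; rfl

lemma bd_SdN (k j : ℕ) (c : Chain E) : bd (SdN (k + 1) j c) = SdN k j (bd c) := by
  induction j with
  | zero => rfl
  | succ j ih => rw [SdN_succ, SdN_succ, bd_Sd, ih]

lemma mapC_SdN (φ : E →ₗ[ℝ] F) (k j : ℕ) (c : Chain E) :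
    mapC φ (SdN k j c) = SdN k j (mapC φ c) := by
  induction j with
  | zero => rfl
  | succ j ih => rw [SdN_succ, SdN_succ, mapC_Sd, ih]

lemma SdN_fine {N : ℕ} (hN : 1 ≤ N) {D : ℝ} (hD : 0 ≤ D) (k : ℕ) (hk : k ≤ N) {K : Set E}
    (j : ℕ) {c : Chain E} (hc : c ∈ Sup (FineK k K D)) :
    SdN k j c ∈ Sup (FineK k K ((1 - (N : ℝ)⁻¹) ^ j * D)) := by
  have h1 : 0 ≤ 1 - (N : ℝ)⁻¹ := by
    have : (N : ℝ)⁻¹ ≤ 1 := by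
      apply inv_le_one_of_one_le₀; exact_mod_cast hN
    linarith
  induction j with
  | zero => simpa [SdN] using hc
  | succ j ih =>
    rw [SdN_succ]
    refine map_Sup (Sd k) ?_ ih
    rintro l ⟨C, hC, hCK, hl⟩
    refine Sup_mono ?_ (Sd_fine (N := N) (by positivity) k hk hC hl)
    intro l' hl'
    refine ⟨C, hC, hCK, ?_⟩
    rw [pow_succ', mul_assoc]; exact hl'

end sd

/-! ### prism -/

section prism
variable {V : Type*}

def inj (t : ℝ) (p : V) : V × ℝ := (p, t)

def prL : List V → Chain (V × ℝ)
  | [] => 0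
  | p :: l => of ((p, 1) :: (p, -1) :: l.map (inj (-1))) + cone (p, 1) (prL l)

def pr : Chain V →ₗ[ZMod 2] Chain (V × ℝ) := ext prL

lemma pr_cone (p : V) (c : Chain V) :
    pr (cone p c) = cone (p, 1) (cone (p, -1) (mapC (inj (-1)) c)) + cone (p, 1) (pr c) := by
  refine chain_hom (f := pr ∘ₗ cone p)
    (g := cone (p, 1) ∘ₗ cone (p, -1) ∘ₗ mapC (inj (-1)) + cone (p, 1) ∘ₗ pr) (fun l => ?_) c
  simp [pr, prL]

lemma bd_prL (l : List V) :
    bd (prL l) = pr (bdL l) + of (l.map (inj 1)) + of (l.map (inj (-1))) := by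
  induction l with
  | nil => simp [prL, bdL, add_self_chain]
  | cons p l ih =>
    have hp : pr (of l) = prL l := by simp [pr]
    simp only [prL, bdL, map_add, pr_cone, bd_cone, ih, bd_of, hp, mapC_bdL, cone_of, bdL,
      List.map_cons, inj]
    have := add_self_chain (of ((p, (1:ℝ)) :: l.map (inj (-1))))
    rw [← sub_eq_zero, ← this]
    abel

lemma bd_pr (c : Chain V) :
    bd (pr c) = pr (bd c) + mapC (inj 1) c + mapC (inj (-1)) c := by
  refine chain_hom (f := bd ∘ₗ pr) (g := pr ∘ₗ bd + mapC (inj 1) + mapC (inj (-1))) (fun l => ?_) c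
  have hp : pr (of l) = prL l := by simp [pr]
  simp [hp, bd_prL]

lemma prL_Sup (l : List V) :
    prL l ∈ Sup (fun l' => l'.length = l.length + 1 ∧ ∀ p ∈ l', p.1 ∈ l ∧ |p.2| ≤ 1) := by
  induction l with
  | nil => simp [prL]
  | cons p l ih =>
    refine Submodule.add_mem _ (of_mem_Sup ⟨by simp, ?_⟩) ?_
    · intro q hq
      simp only [List.mem_cons, List.mem_map] at hq
      rcases hq with rfl | rfl | ⟨q', h, rfl⟩
      · simp
      · simp
      · simp [inj, h]
    · refine map_Sup (cone (p, 1)) (fun l' hl' => ?_) ih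
      rw [cone_of]
      refine of_mem_Sup ⟨by simp [hl'.1], ?_⟩
      intro q hq
      rcases List.mem_cons.1 hq with rfl | hq
      · simp
      · exact ⟨List.mem_cons_of_mem _ (hl'.2 q hq).1, (hl'.2 q hq).2⟩

end prism

/-! ### labels -/

section labels
variable {n : ℕ} [NeZero n]

def idx (δ : ℝ) (s : Fin n → ℝ) : Fin n := Classical.epsilon fun i => δ ≤ s i

def lab (δ : ℝ) (y : Fin n → ℝ) : ℕ :=
  2 * (idx δ (fun i => |y i|)).1 + if 0 < y (idx δ fun i => |y i|) then 0 else 1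

lemma idx_spec {δ : ℝ} {s : Fin n → ℝ} (h : ∃ i, δ ≤ s i) : δ ≤ s (idx δ s) :=
  Classical.epsilon_spec (p := fun i => δ ≤ s i) h

lemma lab_lt (δ : ℝ) (y : Fin n → ℝ) : lab δ y < 2 * n := by
  unfold lab
  have := (idx δ (fun i => |y i|)).2
  split_ifs <;> omega

lemma lab_neg {δ : ℝ} (hδ : 0 < δ) {y : Fin n → ℝ} (h : ∃ i, δ ≤ |y i|) :
    lab δ (-y) = nl (lab δ y) := by
  have hs := idx_spec (s := fun i => |y i|) h
  unfold lab nl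
  simp only [Pi.neg_apply, abs_neg]
  set i := idx δ (fun i => |y i|)
  have hne : y i ≠ 0 := by
    intro h0
    simp only [h0, abs_zero] at hs
    linarith
  rcases lt_or_gt_of_ne hne with h1 | h1
  · have h2 : ¬ 0 < y i := by linarith
    have h3 : 0 < - y i := by linarith
    simp only [h2, h3, if_true, if_false]
    split_ifs <;> omega
  · have h3 : ¬ 0 < - y i := by linarith
    simp only [h1, h3, if_true, if_false]
    split_ifs <;> omega

lemma lab_eq {δ : ℝ} {y y' : Fin n → ℝ} (h : ∃ i, δ ≤ |y i|)
    (h' : ∃ i, δ ≤ |y' i|) (hd : ∀ i, |y i - y' i| < δ) (e : lab δ y / 2 = lab δ y' / 2) :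
    lab δ y = lab δ y' := by
  have hs := idx_spec (s := fun i => |y i|) h
  have hs' := idx_spec (s := fun i => |y' i|) h'
  unfold lab at e ⊢
  set i := idx δ (fun i => |y i|)
  set i' := idx δ (fun i => |y' i|)
  have hi : i = i' := by
    apply Fin.ext
    split_ifs at e <;> omega
  rw [← hi] at hs' ⊢
  have hdi := abs_lt.1 (hd i)
  by_cases h1 : 0 < y i <;> by_cases h2 : 0 < y' i <;> simp only [h1, h2, if_true, if_false]
  · rw [abs_of_pos h1] at hs
    rw [abs_of_nonpos (by linarith)] at hs'
    linarith
  · rw [abs_of_pos h2] at hs'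
    rw [abs_of_nonpos (by linarith)] at hs
    linarith

end labels

/-! ### the sphere -/

section sphere
variable (n : ℕ)

abbrev V := EuclideanSpace ℝ (Fin n)

def ee (k : ℕ) : V n := if h : k < n then EuclideanSpace.single ⟨k, h⟩ 1 else 0

def zz : ℕ → Chain (V n)
  | 0 => of []
  | k + 1 => cone (ee n k) (zz k) + mapC (fun x => -x) (cone (ee n k) (zz k))

def hh (k : ℕ) : Chain (V n) := cone (ee n k) (zz n k)

lemma zz_succ (k : ℕ) : zz n (k + 1) = hh n k + mapC (fun x => -x) (hh n k) := rfl

lemma zz_neg (k : ℕ) : mapC (fun x => -x) (zz n k) = zz n k := by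
  cases k with
  | zero => simp [zz]
  | succ k =>
    rw [zz_succ, map_add, mapC_mapC]
    have : ((fun x : V n => -x) ∘ fun x => -x) = id := by funext x; simp
    have h2 : ∀ c : Chain (V n), mapC id c = c := fun c =>
      chain_hom (f := mapC id) (g := LinearMap.id) (fun l => by simp) c
    rw [this, h2, add_comm]

lemma bd_zz (k : ℕ) : bd (zz n k) = 0 := by
  induction k with
  | zero => simp [zz, bdL]
  | succ k ih =>
    rw [zz_succ, map_add, ← mapC_bd, hh, bd_cone, ih, map_zero, add_zero, zz_neg, add_self_chain]

lemma bd_hh (k : ℕ) : bd (hh n k) = zz n k := by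
  rw [hh, bd_cone, bd_zz, map_zero, add_zero]

def ZP (k : ℕ) (l : List (V n)) : Prop :=
  l.length = k ∧ ∃ s : Fin n → ℝ, (∀ i, |s i| ≤ 1) ∧
    ∀ p ∈ l, ‖p‖ ≤ 1 ∧ ∑ i, s i * p i = 1 ∧ ∀ i : Fin n, k ≤ i.1 → p i = 0

lemma hh_of_zz {k : ℕ} (hk : k < n) (h : zz n k ∈ Sup (ZP n k)) :
    hh n k ∈ Sup (ZP n (k + 1)) := by
  refine map_Sup (cone (ee n k)) (fun l hl => ?_) h
  rw [cone_of]
  obtain ⟨h1, s, hs, hl⟩ := hl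
  refine of_mem_Sup ⟨by simp [h1], Function.update s ⟨k, hk⟩ 1, ?_, ?_⟩
  · intro i
    by_cases hi : i = ⟨k, hk⟩
    · subst hi; simp
    · rw [Function.update_of_ne hi]; exact hs i
  · intro p hp
    rcases List.mem_cons.1 hp with rfl | hp
    · simp only [ee, hk, dif_pos]
      refine ⟨by simp, ?_, ?_⟩
      · rw [Finset.sum_eq_single ⟨k, hk⟩]
        · simp
        · intro b _ hb; simp [hb]
        · simp
      · intro i hi
        have : i ≠ ⟨k, hk⟩ := by rintro rfl; simp at hi
        simp [this]
    · obtain ⟨a, b, c⟩ := hl p hp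
      refine ⟨a, ?_, fun i hi => c i (by omega)⟩
      rw [← b]
      refine Finset.sum_congr rfl fun i _ => ?_
      by_cases hi : i = ⟨k, hk⟩
      · subst hi; rw [c _ (by simp)]; simp
      · rw [Function.update_of_ne hi]

lemma zz_Sup {k : ℕ} (hk : k ≤ n) : zz n k ∈ Sup (ZP n k) := by
  induction k with
  | zero => exact of_mem_Sup ⟨rfl, fun _ => 0, by simp, by simp⟩
  | succ k ih =>
    have h := hh_of_zz n (by omega) (ih (by omega))
    rw [zz_succ]
    refine Submodule.add_mem _ h (map_Sup _ (fun l hl => ?_) h)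
    rw [mapC_of]
    obtain ⟨h1, s, hs, hl⟩ := hl
    refine of_mem_Sup ⟨by simp [h1], -s, by simpa using hs, ?_⟩
    intro p hp
    obtain ⟨q, hq, rfl⟩ := List.mem_map.1 hp
    obtain ⟨a, b, c⟩ := hl q hq
    refine ⟨by simpa using a, by simpa using b, fun i hi => by simpa using c i hi⟩

def KK (T : Set ℝ) : Set (V n × ℝ) := {p | ‖p.1‖ ≤ 1 ∧ 1 ≤ ∑ i, |p.1 i| ∧ p.2 ∈ T}

lemma fine_of {T : Set ℝ} (hT : Convex ℝ T) (hT' : ∀ t ∈ T, |t| ≤ 1) {k m : ℕ} {l : List (V n)}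
    (hl : ZP n m l) {l' : List (V n × ℝ)} (hlen : l'.length = k)
    (h : ∀ p ∈ l', p.1 ∈ l ∧ p.2 ∈ T) : FineK k (KK n T) 2 l' := by
  obtain ⟨-, s, hs, hl⟩ := hl
  refine ⟨{p | p.1 ∈ Metric.closedBall (0 : V n) 1 ∧ ∑ i, s i * p.1 i = 1 ∧ p.2 ∈ T},
    ?_, ?_, hlen, ?_, ?_⟩
  · rintro ⟨x, t⟩ ⟨hx1, hx2, hx3⟩ ⟨y, u⟩ ⟨hy1, hy2, hy3⟩ a b ha hb hab
    refine ⟨convex_closedBall _ _ hx1 hy1 ha hb hab, ?_, hT hx3 hy3 ha hb hab⟩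
    have : ∑ i, s i * (a • x + b • y) i = a * ∑ i, s i * x i + b * ∑ i, s i * y i := by
      rw [Finset.mul_sum, Finset.mul_sum, ← Finset.sum_add_distrib]
      refine Finset.sum_congr rfl fun i _ => ?_
      simp; ring
    simp only [Prod.smul_mk, Prod.mk_add_mk]
    rw [this]
    simp only at hx2 hy2
    rw [hx2, hy2]; linarith
  · rintro ⟨x, t⟩ ⟨hx1, hx2, hx3⟩
    refine ⟨by simpa using hx1, ?_, hx3⟩
    simp only at hx2 ⊢
    rw [← hx2]
    refine Finset.sum_le_sum fun i _ => ?_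
    refine (le_abs_self _).trans ?_
    rw [abs_mul]
    exact mul_le_of_le_one_left (abs_nonneg _) (hs i)
  · intro p hp
    obtain ⟨a, b, -⟩ := hl p.1 (h p hp).1
    exact ⟨by simpa using a, b, (h p hp).2⟩
  · intro p hp q hq
    rw [Prod.dist_eq]
    refine max_le ?_ ?_
    · rw [dist_eq_norm]
      have := norm_sub_le p.1 q.1
      have := (hl p.1 (h p hp).1).1
      have := (hl q.1 (h q hq).1).1
      linarith
    · rw [Real.dist_eq]
      have := abs_sub p.2 q.2
      have := hT' _ (h p hp).2
      have := hT' _ (h q hq).2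
      linarith

lemma inj_fine {t : ℝ} (ht : |t| ≤ 1) {m : ℕ} {c : Chain (V n)} (hc : c ∈ Sup (ZP n m)) :
    mapC (inj t) c ∈ Sup (FineK m (KK n {t}) 2) := by
  refine map_Sup _ (fun l hl => ?_) hc
  rw [mapC_of]
  refine of_mem_Sup (fine_of n (convex_singleton t) (by simpa using ht) hl (by simp [hl.1]) ?_)
  intro p hp
  obtain ⟨q, hq, rfl⟩ := List.mem_map.1 hp
  exact ⟨hq, rfl⟩

lemma pr_fine {m : ℕ} {c : Chain (V n)} (hc : c ∈ Sup (ZP n m)) :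
    pr c ∈ Sup (FineK (m + 1) (KK n (Set.Icc (-1) 1)) 2) := by
  refine map_Sup _ (fun l hl => ?_) hc
  have hp : pr (of l) = prL l := by simp [pr]
  rw [hp]
  refine Sup_mono (fun l' hl' => ?_) (prL_Sup l)
  refine fine_of n (convex_Icc _ _) (fun t ht => abs_le.2 ht) hl (by rw [hl'.1, hl.1]) ?_
  intro p hp
  exact ⟨(hl'.2 p hp).1, abs_le.1 (hl'.2 p hp).2⟩

def aa : V n × ℝ →ₗ[ℝ] V n × ℝ := LinearMap.prodMap (-LinearMap.id) LinearMap.id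

lemma mapC_aa_inj (t : ℝ) (c : Chain (V n)) :
    mapC (aa n) (mapC (inj t) c) = mapC (inj t) (mapC (fun x => -x) c) := by
  rw [mapC_mapC, mapC_mapC]
  congr 1

lemma KK_compact : IsCompact (KK n (Set.Icc (-1) 1)) := by
  have h : IsCompact (Metric.closedBall (0 : V n) 1 ×ˢ Set.Icc (-1 : ℝ) 1) :=
    (isCompact_closedBall _ _).prod isCompact_Icc
  have : KK n (Set.Icc (-1) 1) = (Metric.closedBall (0 : V n) 1 ×ˢ Set.Icc (-1 : ℝ) 1) ∩
      {p | 1 ≤ ∑ i, |p.1 i|} := by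
    ext p
    simp only [KK, Set.mem_ofPred_eq, Set.mem_inter_iff, Set.mem_prod, mem_closedBall_zero_iff]
    tauto
  rw [this]
  refine h.inter_right (isClosed_le continuous_const ?_)
  fun_prop

theorem core [NeZero n] (G : V n × ℝ → Fin n → ℝ)
    (hc : ContinuousOn G (KK n (Set.Icc (-1) 1)))
    (h0 : ∀ p ∈ KK n (Set.Icc (-1) 1), G p ≠ 0)
    (hu : ∀ x, G (-x, 1) = G (x, 1)) (hw : ∀ x, G (-x, -1) = - G (x, -1)) : False := by
  set K := KK n (Set.Icc (-1) 1) with hK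
  have hKc : IsCompact K := KK_compact n
  obtain ⟨δ, hδ, hδK⟩ := hKc.exists_forall_le' (f := fun p => ‖G p‖) hc.norm (a := 0)
    (fun p hp => norm_pos_iff.2 (h0 p hp))
  have hgood : ∀ p ∈ K, ∃ i, δ ≤ |G p i| := by
    intro p hp
    by_contra! hcon
    have : ‖G p‖ < δ := (pi_norm_lt_iff hδ).2 (fun i => by rw [Real.norm_eq_abs]; exact hcon i)
    exact absurd (hδK p hp) (not_le.2 this)
  have huc := hKc.uniformContinuousOn_of_continuous hc
  rw [Metric.uniformContinuousOn_iff] at huc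
  obtain ⟨η, hη, hηK⟩ := huc δ hδ
  set r : ℝ := 1 - ((n + 1 : ℕ) : ℝ)⁻¹ with hr
  have hN : (1 : ℝ) ≤ ((n + 1 : ℕ) : ℝ) := by exact_mod_cast (by omega : 1 ≤ n + 1)
  have hr0 : 0 ≤ r := by
    have := inv_le_one_of_one_le₀ hN; linarith
  have hr1 : r < 1 := by
    have : (0 : ℝ) < ((n + 1 : ℕ) : ℝ)⁻¹ := by positivity
    linarith
  obtain ⟨j, hj⟩ := exists_pow_lt_of_lt_one (half_pos hη) hr1
  have hj2 : r ^ j * 2 < η := by linarith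
  set lam : V n × ℝ → ℕ := fun p => lab δ (G p) with hlam
  have hfineNC : ∀ (k : ℕ) (T : Set ℝ), T ⊆ Set.Icc (-1) 1 → ∀ l, FineK k (KK n T) (r ^ j * 2) l →
      l.length = k ∧ (∀ p ∈ l, p ∈ KK n T ∧ p ∈ K) ∧ NC (l.map lam) := by
    rintro k T hT l ⟨C, -, hCK, hlen, hlC, hld⟩
    have hlK : ∀ p ∈ l, p ∈ KK n T ∧ p ∈ K := fun p hp => by
      have := hCK (hlC p hp)
      exact ⟨this, this.1, this.2.1, hT this.2.2⟩
    refine ⟨hlen, hlK, ?_⟩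
    intro x hx y hy hxy
    obtain ⟨p, hp, rfl⟩ := List.mem_map.1 hx
    obtain ⟨q, hq, rfl⟩ := List.mem_map.1 hy
    refine lab_eq (hgood p (hlK p hp).2) (hgood q (hlK q hq).2) (fun i => ?_) hxy
    have h1 := hηK p (hlK p hp).2 q (hlK q hq).2 ((hld p hp q hq).trans_lt hj2)
    exact (dist_le_pi_dist (G p) (G q) i).trans_lt h1
  have hIcc1 : ({1} : Set ℝ) ⊆ Set.Icc (-1) 1 := by
    rw [Set.singleton_subset_iff]; constructor <;> norm_num
  have hIcc2 : ({-1} : Set ℝ) ⊆ Set.Icc (-1) 1 := by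
    rw [Set.singleton_subset_iff]; constructor <;> norm_num
  have hz : ∀ t k, SdN (k + 1) j (mapC (inj t) (zz n (k + 1))) =
      SdN (k + 1) j (mapC (inj t) (hh n k)) +
        mapC (aa n) (SdN (k + 1) j (mapC (inj t) (hh n k))) := by
    intro t k
    rw [zz_succ, map_add, map_add, mapC_SdN, mapC_aa_inj]
  have hhf : ∀ t, |t| ≤ 1 → ∀ k, k < n → SdN (k + 1) j (mapC (inj t) (hh n k)) ∈
      Sup (FineK (k + 1) (KK n {t}) (r ^ j * 2)) := by
    intro t ht k hk
    exact SdN_fine (N := n + 1) (by omega) (by norm_num) (k + 1) (by omega) j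
      (inj_fine n ht (hh_of_zz n hk (zz_Sup n hk.le)))
  -- the odd end
  have hodd : ∀ k, k ≤ n → ∀ b, A lam b (SdN k j (mapC (inj (-1)) (zz n k))) = 1 := by
    intro k
    induction k with
    | zero =>
      intro _ b
      rw [SdN_zero_left]
      simp [zz, A, srt, alt]
    | succ k ih =>
      intro hk b
      have hA : A lam b (mapC (aa n) (SdN (k + 1) j (mapC (inj (-1)) (hh n k)))) =
          A lam (!b) (SdN (k + 1) j (mapC (inj (-1)) (hh n k))) := by
        refine eqOn_Sup ((A lam b).comp (mapC (aa n))) (A lam (!b)) (fun l hl => ?_)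
          (hhf (-1) (by simp) k hk)
        obtain ⟨-, h2, h3⟩ := hfineNC _ _ hIcc2 l hl
        simp only [LinearMap.comp_apply, mapC_of, A, ext_of]
        rw [← alt_nl, ← srt_nl h3, List.map_map, List.map_map]
        congr 2
        refine List.map_congr_left fun p hp => ?_
        obtain ⟨hp1, hp2⟩ := h2 p hp
        have e : p.2 = -1 := hp1.2.2
        have e' : p = (p.1, -1) := Prod.ext rfl e
        have : G (aa n p) = - G p := by
          rw [e']; exact hw p.1
        simp only [Function.comp, hlam, this]
        exact lab_neg hδ (hgood p hp2)
      rw [hz, map_add, hA, ← A_bd, bd_SdN, ← mapC_bd, bd_hh]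
      exact ih (by omega) b
  -- the even end
  obtain ⟨m, rfl⟩ : ∃ m, n = m + 1 := ⟨n - 1, by have := NeZero.ne n; omega⟩
  have heven : A lam true (SdN (m + 1) j (mapC (inj 1) (zz (m + 1) (m + 1)))) = 0 := by
    have hA : A lam true (mapC (aa (m + 1)) (SdN (m + 1) j (mapC (inj 1) (hh (m + 1) m)))) =
        A lam true (SdN (m + 1) j (mapC (inj 1) (hh (m + 1) m))) := by
      refine eqOn_Sup ((A lam true).comp (mapC (aa (m + 1)))) (A lam true) (fun l hl => ?_)
        (hhf 1 (by simp) m (by omega))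
      obtain ⟨-, h2, h3⟩ := hfineNC _ _ hIcc1 l hl
      simp only [LinearMap.comp_apply, mapC_of, A, ext_of]
      rw [List.map_map]
      congr 2
      refine List.map_congr_left fun p hp => ?_
      obtain ⟨hp1, hp2⟩ := h2 p hp
      have e : p.2 = 1 := hp1.2.2
      have e' : p = (p.1, 1) := Prod.ext rfl e
      have : G (aa (m + 1) p) = G p := by
        rw [e']; exact hu p.1
      simp only [Function.comp, hlam, this]
    rw [hz, map_add, hA]
    exact CharTwo.add_self_eq_zero _
  -- the cylinder
  have hcyl : ∀ b, A lam b (SdN (m + 1 + 1) j (pr (zz (m + 1) (m + 1)))) = 0 := by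
    intro b
    refine eqOn_Sup (A lam b) 0 (fun l hl => ?_)
      (SdN_fine (N := m + 1 + 1) (by omega) (by norm_num) (m + 1 + 1) le_rfl j
        (pr_fine (m + 1) (zz_Sup (m + 1) le_rfl)))
    obtain ⟨h1, h2, h3⟩ := hfineNC _ _ subset_rfl l hl
    simp only [A, ext_of, LinearMap.zero_apply]
    by_contra hne
    have hp := srt_perm (l.map lam)
    have := alt_short (n := m + 1) (srt (l.map lam)) (srt_sorted _)
      (fun x hx y hy => h3 x (hp.subset hx) y (hp.subset hy))
      (fun x hx => by
        obtain ⟨p, -, rfl⟩ := List.mem_map.1 (hp.subset hx)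
        exact lab_lt _ _) b hne 0 (by omega) (fun _ _ => Nat.zero_le _)
    rw [hp.length_eq, List.length_map, h1] at this
    omega
  have hfin := A_bd lam true (SdN (m + 1 + 1) j (pr (zz (m + 1) (m + 1))))
  rw [hcyl, hcyl, bd_SdN, bd_pr, bd_zz, map_zero, zero_add, map_add, map_add, heven,
    hodd _ le_rfl] at hfin
  simp at hfin

end sphere

end

end FlipBU

theorem no_antipodal_to_flip_map_from_sphere (r : ℕ) (hr : 0 < r) (n k : ℕ)
    (hn : n = 2 ^ r - 1) (h1 : 1 < 2 * k) (h2 : 2 * k ≤ n) :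
    ¬ ∃ f : Metric.sphere (0 : EuclideanSpace ℝ (Fin n)) 1 → Stiefel n (2 * k),
        Continuous f ∧ ∀ v, f (-v) = flipFrame (f v) := by
  rintro ⟨f, hf, hfe⟩
  have : NeZero n := ⟨by omega⟩
  let i0 : Fin (2 * k) := ⟨0, by omega⟩
  let i1 : Fin (2 * k) := ⟨1, by omega⟩
  have hflip : finFlip i0 = i1 := by apply Fin.ext; simp [finFlip, i0, i1]
  let nrm : EuclideanSpace ℝ (Fin n) → EuclideanSpace ℝ (Fin n) := fun x => ‖x‖⁻¹ • x
  let v : EuclideanSpace ℝ (Fin n) → EuclideanSpace ℝ (Fin n) := fun x =>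
    if h : ‖nrm x‖ = 1 then (f ⟨nrm x, by simpa using h⟩).1 i0 else 0
  have hnrm : ∀ x, x ≠ 0 → ‖nrm x‖ = 1 := fun x hx => by
    simp only [nrm, norm_smul, norm_inv, norm_norm]
    exact inv_mul_cancel₀ (norm_ne_zero_iff.2 hx)
  have hv : ∀ x (h : ‖nrm x‖ = 1), v x = (f ⟨nrm x, by simpa using h⟩).1 i0 := by
    intro x h; simp only [v]; rw [dif_pos h]
  have hv' : ∀ x (h : ‖nrm x‖ = 1), v (-x) = (f ⟨nrm x, by simpa using h⟩).1 i1 := by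
    intro x h
    have e : nrm (-x) = - nrm x := by simp [nrm]
    rw [hv (-x) (by rw [e, norm_neg, h])]
    have := hfe ⟨nrm x, by simpa using h⟩
    have e2 : (⟨nrm (-x), by rw [e]; simpa using h⟩ : Metric.sphere (0 : EuclideanSpace ℝ (Fin n)) 1)
        = - ⟨nrm x, by simpa using h⟩ := by
      apply Subtype.ext; simpa using e
    rw [e2, this]
    simp only [flipFrame, Function.comp, hflip]
  have hvc : ContinuousOn v {x | x ≠ 0} := by
    rw [continuousOn_iff_continuous_domRestrict]
    have hcn : Continuous fun x : {x : EuclideanSpace ℝ (Fin n) | x ≠ 0} =>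
        (⟨nrm x.1, by simpa using hnrm x.1 x.2⟩ :
          Metric.sphere (0 : EuclideanSpace ℝ (Fin n)) 1) := by
      refine Continuous.subtype_mk ?_ _
      refine Continuous.smul (Continuous.inv₀ continuous_subtype_val.norm ?_) continuous_subtype_val
      intro x; exact norm_ne_zero_iff.2 x.2
    have : Set.domRestrict {x | x ≠ 0} v = fun x : {x : EuclideanSpace ℝ (Fin n) | x ≠ 0} =>
        (f ⟨nrm x.1, by simpa using hnrm x.1 x.2⟩).1 i0 := by
      funext x
      exact hv x.1 (hnrm x.1 x.2)
    rw [this]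
    exact (continuous_apply i0).comp (continuous_subtype_val.comp (hf.comp hcn))
  have hK0 : ∀ p ∈ FlipBU.KK n (Set.Icc (-1) 1), p.1 ≠ 0 := by
    rintro p ⟨-, hp, -⟩ h
    rw [h] at hp
    simp at hp
    linarith
  refine FlipBU.core n (fun p i => (v p.1 + p.2 • v (-p.1)) i) ?_ ?_ ?_ ?_
  · have hc1 : ContinuousOn (fun p : EuclideanSpace ℝ (Fin n) × ℝ => v p.1)
        (FlipBU.KK n (Set.Icc (-1) 1)) :=
      hvc.comp continuous_fst.continuousOn hK0
    have hc2 : ContinuousOn (fun p : EuclideanSpace ℝ (Fin n) × ℝ => v (-p.1))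
        (FlipBU.KK n (Set.Icc (-1) 1)) :=
      hvc.comp continuous_fst.neg.continuousOn (fun p hp => neg_ne_zero.2 (hK0 p hp))
    have hc3 := hc1.add (continuous_snd.continuousOn.smul hc2)
    exact (PiLp.continuous_ofLp 2 (fun _ : Fin n => ℝ)).comp_continuousOn hc3
  · intro p hp h
    have h' : v p.1 + p.2 • v (-p.1) = 0 := by
      ext i; exact congrFun h i
    have hp0 := hnrm p.1 (hK0 p hp)
    rw [hv p.1 hp0, hv' p.1 hp0] at h'
    set w := f ⟨nrm p.1, by simpa using hp0⟩
    have ho := orthonormal_iff_ite.1 w.2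
    have h01 : i0 ≠ i1 := by simp [i0, i1]
    have := congrArg (fun y => inner ℝ (w.1 i0) y) h'
    simp only [inner_add_right, inner_smul_right, inner_zero_right, ho i0 i0, ho i0 i1, h01,
      if_true, if_false] at this
    norm_num at this
  · intro x
    funext i
    simp [add_comm]
  · intro x
    funext i
    simp
end

section
/- Let n = 2^r − 1 for some r > 2 (so n is odd and n − 1 is even). There is no continuous C_2-equivariant map f : V_{n,n-1} → V_{n,n-1}, where the source carries the flip C_2-action and the target carries the antipodal C_2-action. (V_{n,n-1} is identified with SO(n).) -/
/-- Clifford-type data. -/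
structure CliffData (N : ℕ) (ι K : Type) [Fintype ι] [DecidableEq ι] where
  g : Fin (N + 1) → Matrix ι ι ℝ
  h : K → Matrix ι ι ℝ
  g_sq : ∀ i, g i * g i = 1
  g_anti : ∀ i j, i ≠ j → g i * g j = -(g j * g i)
  g_tr : ∀ i, (g i).transpose = g i
  gh : ∀ i j, g i * h j = -(h j * g i)
  comm : ∀ c : Matrix ι ι ℝ, (∀ j, c * h j = h j * c) →
    (∀ i : Fin N, c * g i.castSucc = g i.castSucc * c) → ∃ x : ℝ, c = x • (1 : Matrix ι ι ℝ)

def cliffBase : CliffData 0 (Fin 2) Bool where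
  g := fun _ => !![0, 1; 1, 0]
  h := fun b => if b then !![1, 0; 0, -1] else !![0, 1; -1, 0]
  g_sq := by
    intro i
    ext a b; fin_cases a <;> fin_cases b <;> simp
  g_anti := by
    intro i j hij
    exact absurd (Fin.ext (by omega)) hij
  g_tr := by
    intro i
    ext a b; fin_cases a <;> fin_cases b <;> simp
  gh := by
    intro i j
    cases j <;> ext a b <;> fin_cases a <;> fin_cases b <;> simp
  comm := by
    intro c hc _
    have h1 := hc true
    have h2 := hc false
    have e1 := congrFun (congrFun h1 0) 1
    have e2 := congrFun (congrFun h1 1) 0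
    have e3 := congrFun (congrFun h2 0) 1
    simp [Matrix.mul_apply, Fin.sum_univ_two] at e1 e2 e3
    refine ⟨c 0 0, ?_⟩
    ext a b
    fin_cases a <;> fin_cases b <;> simp <;> linarith

def cliffStep {N : ℕ} {ι K : Type} [Fintype ι] [DecidableEq ι] (D : CliffData N ι K) :
    CliffData (N + 1) (ι ⊕ ι) (Option K) where
  g := Fin.cons (Matrix.fromBlocks 0 1 1 0) (fun i => Matrix.fromBlocks (D.g i) 0 0 (-D.g i))
  h := fun o => o.elim (Matrix.fromBlocks 0 1 (-1) 0)
    (fun j => Matrix.fromBlocks (D.h j) 0 0 (-D.h j))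
  g_sq := by
    intro i
    refine Fin.cases ?_ (fun i => ?_) i
    · simp [Matrix.fromBlocks_multiply, Matrix.fromBlocks_one]
    · simp [Matrix.fromBlocks_multiply, D.g_sq, Matrix.fromBlocks_one]
  g_anti := by
    intro i j
    refine Fin.cases ?_ (fun i => ?_) i <;> refine Fin.cases ?_ (fun j => ?_) j
    · simp
    · intro _; simp [Matrix.fromBlocks_multiply, Matrix.fromBlocks_neg]
    · intro _; simp [Matrix.fromBlocks_multiply, Matrix.fromBlocks_neg]
    · intro hij
      have : i ≠ j := fun h => hij (by rw [h])
      simp [Matrix.fromBlocks_multiply, Matrix.fromBlocks_neg, D.g_anti i j this]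
  g_tr := by
    intro i
    refine Fin.cases ?_ (fun i => ?_) i
    · simp [Matrix.fromBlocks_transpose]
    · simp [Matrix.fromBlocks_transpose, D.g_tr]
  gh := by
    intro i j
    refine Fin.cases ?_ (fun i => ?_) i <;> cases j
    · simp [Matrix.fromBlocks_multiply, Matrix.fromBlocks_neg]
    · simp [Matrix.fromBlocks_multiply, Matrix.fromBlocks_neg]
    · simp [Matrix.fromBlocks_multiply, Matrix.fromBlocks_neg]
    · simp [Matrix.fromBlocks_multiply, Matrix.fromBlocks_neg, D.gh]
  comm := by
    intro c h1 h2
    obtain ⟨p, q, r, s, rfl⟩ : ∃ p q r s, c = Matrix.fromBlocks p q r s :=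
      ⟨_, _, _, _, (Matrix.fromBlocks_toBlocks c).symm⟩
    have e0 := h1 none
    have e1 := h2 0
    simp [Matrix.fromBlocks_multiply] at e0 e1
    obtain ⟨a1, a2, a3, a4⟩ := e0
    obtain ⟨b1, b2, b3, b4⟩ := e1
    have hq : q = 0 := by
      have : q = -q := by rw [← b1] at a1; exact a1.symm
      ext i j
      have := congrFun (congrFun this i) j
      simp at this ⊢; linarith
    have hr : r = 0 := by rw [← b1, hq]
    subst hq hr b2
    obtain ⟨x, rfl⟩ := D.comm p (fun j => by
        have := h1 (some j)
        simp [Matrix.fromBlocks_multiply] at this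
        exact this) (fun i => by
        have := h2 i.succ
        rw [Fin.castSucc_succ] at this
        simp [Matrix.fromBlocks_multiply] at this
        exact this)
    exact ⟨x, by rw [← Matrix.fromBlocks_one, Matrix.fromBlocks_smul]; simp⟩

theorem exists_cliff (N : ℕ) : ∃ (ι K : Type) (_ : Fintype ι) (_ : DecidableEq ι),
    Nonempty ι ∧ Nonempty (CliffData N ι K) := by
  induction N with
  | zero => exact ⟨Fin 2, Bool, inferInstance, inferInstance, ⟨0⟩, ⟨cliffBase⟩⟩
  | succ N ih =>
    obtain ⟨ι, K, i1, i2, ⟨x⟩, ⟨D⟩⟩ := ih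
    exact ⟨ι ⊕ ι, Option K, inferInstance, inferInstance, ⟨Sum.inl x⟩, ⟨cliffStep D⟩⟩

namespace CliffData

variable {N : ℕ} {ι K : Type} [Fintype ι] [DecidableEq ι] (D : CliffData N ι K)

/-- The Clifford map. -/
noncomputable def gam (v : EuclideanSpace ℝ (Fin (N + 1))) : Matrix ι ι ℝ := ∑ i, v i • D.g i

lemma gam_add (v w : EuclideanSpace ℝ (Fin (N + 1))) : D.gam (v + w) = D.gam v + D.gam w := by
  simp [gam, add_smul, Finset.sum_add_distrib]

lemma gam_smul (x : ℝ) (v : EuclideanSpace ℝ (Fin (N + 1))) : D.gam (x • v) = x • D.gam v := by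
  simp [gam, Finset.smul_sum, mul_smul]

lemma gam_neg (v : EuclideanSpace ℝ (Fin (N + 1))) : D.gam (-v) = -D.gam v := by
  simp [gam]

lemma gam_sub (v w : EuclideanSpace ℝ (Fin (N + 1))) : D.gam (v - w) = D.gam v - D.gam w := by
  rw [sub_eq_add_neg, gam_add, gam_neg, sub_eq_add_neg]

lemma gam_single (i : Fin (N + 1)) : D.gam (EuclideanSpace.single i 1) = D.g i := by
  simp [gam]

lemma gam_tr (v : EuclideanSpace ℝ (Fin (N + 1))) : (D.gam v).transpose = D.gam v := by
  simp [gam, Matrix.transpose_sum, D.g_tr]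

lemma gam_h (v : EuclideanSpace ℝ (Fin (N + 1))) (j : K) :
    D.gam v * D.h j = -(D.h j * D.gam v) := by
  simp [gam, Finset.sum_mul, Finset.mul_sum, D.gh]

lemma gam_mul (v w : EuclideanSpace ℝ (Fin (N + 1))) :
    D.gam v * D.gam w + D.gam w * D.gam v = (2 * inner ℝ v w) • (1 : Matrix ι ι ℝ) := by
  have key : ∀ i j, D.g i * D.g j + D.g j * D.g i
      = (if i = j then (2 : ℝ) else 0) • (1 : Matrix ι ι ℝ) := by
    intro i j
    split_ifs with h
    · subst h; rw [D.g_sq, two_smul]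
    · rw [D.g_anti i j h]; simp
  have e1 : D.gam v * D.gam w = ∑ i, ∑ j, (v i * w j) • (D.g i * D.g j) := by
    rw [Finset.sum_comm]
    simp only [gam, Finset.sum_mul, Finset.mul_sum, smul_mul_assoc, mul_smul_comm, Finset.smul_sum,
      smul_smul]
    exact Finset.sum_congr rfl fun i _ => Finset.sum_congr rfl fun j _ => by rw [mul_comm]
  have e2 : D.gam w * D.gam v = ∑ i, ∑ j, (v i * w j) • (D.g j * D.g i) := by
    simp only [gam, Finset.sum_mul, Finset.mul_sum, smul_mul_assoc, mul_smul_comm, Finset.smul_sum,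
      smul_smul]
  rw [e1, e2]
  simp_rw [← Finset.sum_add_distrib, ← smul_add, key]
  simp only [smul_smul, ← Finset.sum_smul]
  congr 1
  simp [PiLp.inner_apply, Finset.mul_sum]
  refine Finset.sum_congr rfl fun i _ => by ring

lemma gam_sq (v : EuclideanSpace ℝ (Fin (N + 1))) (hv : ‖v‖ = 1) : D.gam v * D.gam v = 1 := by
  have := D.gam_mul v v
  rw [real_inner_self_eq_norm_sq, hv] at this
  have h2 : (2 : ℝ) • (D.gam v * D.gam v) = (2 : ℝ) • (1 : Matrix ι ι ℝ) := by
    rw [two_smul, this]; simp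
  exact smul_right_injective _ (two_ne_zero (α := ℝ)) h2

/-- `a` implements the isometry `φ` with sign `s`. -/
def Impl (φ : EuclideanSpace ℝ (Fin (N + 1)) ≃ₗᵢ[ℝ] EuclideanSpace ℝ (Fin (N + 1))) (s : ℝ) : Prop :=
  ∃ a : Matrix ι ι ℝ, a * a.transpose = 1 ∧ (∀ j, a * D.h j = s • (D.h j * a)) ∧
    ∀ v, a * D.gam v = s • (D.gam (φ v) * a)

lemma impl_one : D.Impl 1 1 := ⟨1, by simp, by simp, by simp⟩

lemma impl_mul {φ ψ : EuclideanSpace ℝ (Fin (N + 1)) ≃ₗᵢ[ℝ] EuclideanSpace ℝ (Fin (N + 1))} {s t : ℝ}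
    (h1 : D.Impl φ s) (h2 : D.Impl ψ t) : D.Impl (φ * ψ) (s * t) := by
  obtain ⟨a, a1, a2, a3⟩ := h1
  obtain ⟨b, b1, b2, b3⟩ := h2
  refine ⟨a * b, ?_, fun j => ?_, fun v => ?_⟩
  · rw [Matrix.transpose_mul, mul_assoc, ← mul_assoc b, b1, one_mul, a1]
  · rw [mul_assoc, b2, mul_smul_comm, ← mul_assoc, a2, smul_mul_assoc, smul_smul, mul_assoc, mul_comm s t]
  · rw [mul_assoc, b3, mul_smul_comm, ← mul_assoc, a3, smul_mul_assoc, smul_smul, mul_assoc, mul_comm s t]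
    rfl

lemma impl_refl (u : EuclideanSpace ℝ (Fin (N + 1))) (hu : ‖u‖ = 1) :
    D.Impl ((Submodule.span ℝ {u})ᗮ.reflection) (-1) := by
  refine ⟨D.gam u, ?_, fun j => ?_, fun v => ?_⟩
  · rw [gam_tr, gam_sq _ _ hu]
  · rw [gam_h]; simp
  · rw [Submodule.reflection_orthogonal_apply, Submodule.reflection_singleton_apply, hu]
    have h1 := D.gam_mul u v
    have h2 := D.gam_sq u hu
    rw [gam_neg, gam_sub, two_smul, gam_add, gam_smul]
    rw [eq_sub_of_add_eq h1]
    simp [sub_mul, add_mul, h2, mul_smul, two_smul]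

lemma impl_any (φ : EuclideanSpace ℝ (Fin (N + 1)) ≃ₗᵢ[ℝ] EuclideanSpace ℝ (Fin (N + 1))) :
    D.Impl φ 1 ∨ D.Impl φ (-1) := by
  obtain ⟨l, -, rfl⟩ := φ.reflections_generate_dim
  induction l with
  | nil => exact Or.inl D.impl_one
  | cons u l ih =>
    rw [List.map_cons, List.prod_cons]
    by_cases hu : u = 0
    · have : (Submodule.span ℝ {u})ᗮ.reflection = 1 := by
        ext v : 1
        rw [Submodule.reflection_orthogonal_apply, Submodule.reflection_singleton_apply, hu]
        simp
      rw [this, one_mul]; exact ih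
    · have hs : Submodule.span ℝ {u} = Submodule.span ℝ {(‖u‖⁻¹ : ℝ) • u} :=
        (Submodule.span_singleton_smul_eq (IsUnit.mk0 _ (by simpa using hu)) u).symm
      have h1 : D.Impl ((Submodule.span ℝ {u})ᗮ.reflection) (-1) := by
        have := D.impl_refl ((‖u‖⁻¹ : ℝ) • u) (by
          rw [norm_smul, norm_inv, norm_norm, inv_mul_cancel₀ (by simpa using hu)])
        simpa only [← hs] using this
      rcases ih with ih | ih
      · right; simpa using D.impl_mul h1 ih
      · left; simpa using D.impl_mul h1 ih

lemma exists_lift (v : Fin N → EuclideanSpace ℝ (Fin (N + 1))) (hv : Orthonormal ℝ v) :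
    ∃ a : Matrix ι ι ℝ, a * a.transpose = 1 ∧ (∀ j, a * D.h j = D.h j * a) ∧
      ∀ i : Fin N, a * D.g i.castSucc = D.gam (v i) * a := by
  obtain ⟨b, hb⟩ := Orthonormal.exists_orthonormalBasis_extension_of_card_eq (𝕜 := ℝ)
    (E := EuclideanSpace ℝ (Fin (N + 1))) (ι := Fin (N + 1)) (by simp)
    (v := Fin.snoc (α := fun _ => EuclideanSpace ℝ (Fin (N + 1))) v 0)
    (s := Set.range Fin.castSucc) (by
      have he : Function.Injective (fun x : Set.range (Fin.castSucc (n := N)) => Classical.choose x.2) := by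
        intro x y hxy
        apply Subtype.ext
        rw [← Classical.choose_spec x.2, ← Classical.choose_spec y.2]
        exact congrArg _ hxy
      have := hv.comp _ he
      have e : (Set.range (Fin.castSucc (n := N))).domRestrict
          (Fin.snoc (α := fun _ => EuclideanSpace ℝ (Fin (N + 1))) v 0)
          = v ∘ (fun x : Set.range (Fin.castSucc (n := N)) => Classical.choose x.2) := by
        funext x
        conv_lhs => rw [Set.domRestrict_apply, ← Classical.choose_spec x.2, Fin.snoc_castSucc]
        rfl
      rw [e]; exact this)
  have hb' : ∀ i : Fin N, b i.castSucc = v i := fun i => by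
    rw [hb _ ⟨i, rfl⟩, Fin.snoc_castSucc]
  let φ : EuclideanSpace ℝ (Fin (N + 1)) ≃ₗᵢ[ℝ] EuclideanSpace ℝ (Fin (N + 1)) := b.repr.symm
  have hφ : ∀ i : Fin N, φ (EuclideanSpace.single i.castSucc 1) = v i := fun i => by
    simp [φ, hb']
  have main : ∃ ψ : EuclideanSpace ℝ (Fin (N + 1)) ≃ₗᵢ[ℝ] EuclideanSpace ℝ (Fin (N + 1)),
      D.Impl ψ 1 ∧ ∀ i : Fin N, ψ (EuclideanSpace.single i.castSucc 1) = v i := by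
    rcases D.impl_any φ with h | h
    · exact ⟨φ, h, hφ⟩
    · refine ⟨φ * (Submodule.span ℝ {EuclideanSpace.single (Fin.last N) (1 : ℝ)})ᗮ.reflection, ?_, ?_⟩
      · simpa using D.impl_mul h (D.impl_refl (EuclideanSpace.single (Fin.last N) (1 : ℝ)) (by simp))
      · intro i
        rw [← hφ i]
        change φ _ = φ _
        refine congrArg φ ?_
        change (Submodule.span ℝ {EuclideanSpace.single (Fin.last N) (1 : ℝ)})ᗮ.reflection _ = _
        rw [Submodule.reflection_orthogonal_apply, Submodule.reflection_singleton_apply]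
        have : Fin.last N ≠ i.castSucc := (Fin.castSucc_lt_last i).ne'
        simp [EuclideanSpace.inner_single_left, this]
  obtain ⟨ψ, ⟨a, a1, a2, a3⟩, hψ⟩ := main
  refine ⟨a, a1, fun j => by simpa using a2 j, fun i => ?_⟩
  rw [← gam_single, a3, hψ, one_smul]

lemma exists_twist (m : ℕ) (hm : 2 * m ≤ N) :
    ∃ a : Matrix ι ι ℝ, a * a.transpose = 1 ∧ (∀ j, a * D.h j = D.h j * a) ∧
      a * a = (-1 : ℝ) ^ m • (1 : Matrix ι ι ℝ) ∧
      (∀ i : Fin (N + 1), i.1 < 2 * m → a * D.g i = -(D.g i * a)) ∧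
      (∀ i : Fin (N + 1), 2 * m ≤ i.1 → a * D.g i = D.g i * a) := by
  induction m with
  | zero => exact ⟨1, by simp, by simp, by simp, by simp, by simp⟩
  | succ m ih =>
    obtain ⟨a, a1, a2, a3, a4, a5⟩ := ih (by omega)
    obtain ⟨p, hp⟩ : ∃ p : Fin (N + 1), p.1 = 2 * m := ⟨⟨2 * m, by omega⟩, rfl⟩
    obtain ⟨q, hq⟩ : ∃ q : Fin (N + 1), q.1 = 2 * m + 1 := ⟨⟨2 * m + 1, by omega⟩, rfl⟩
    have hpq : p ≠ q := fun h => by have := congrArg Fin.val h; omega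
    have ap := a5 p (by omega)
    have aq := a5 q (by omega)
    have pp := D.g_sq p
    have qq := D.g_sq q
    have pq := D.g_anti q p hpq.symm
    refine ⟨a * (D.g p * D.g q), ?_, fun j => ?_, ?_, fun i hi => ?_, fun i hi => ?_⟩
    · rw [Matrix.transpose_mul, Matrix.transpose_mul, D.g_tr, D.g_tr]
      calc _ = a * (D.g p * (D.g q * D.g q) * D.g p) * a.transpose := by simp only [mul_assoc]
        _ = _ := by rw [qq, mul_one, pp, mul_one, a1]
    · calc _ = a * (D.g p * (D.g q * D.h j)) := by simp only [mul_assoc]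
        _ = - (a * ((D.g p * D.h j) * D.g q)) := by rw [D.gh]; simp only [mul_neg, mul_assoc]
        _ = (a * D.h j) * D.g p * D.g q := by
          rw [D.gh]; simp only [mul_neg, neg_mul, mul_assoc, neg_neg]
        _ = _ := by rw [a2]; simp only [mul_assoc]
    · calc _ = a * (D.g p * (D.g q * a) * D.g p * D.g q) := by simp only [mul_assoc]
        _ = a * ((D.g p * a) * (D.g q * D.g p) * D.g q) := by rw [← aq]; simp only [mul_assoc]
        _ = -((a * a) * (D.g p * D.g p) * (D.g q * D.g q)) := by
          rw [← ap, pq]; simp only [mul_neg, neg_mul, mul_assoc]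
        _ = _ := by rw [pp, qq, a3]; simp [pow_succ]
    · rcases eq_or_ne i p with rfl | h1
      · calc _ = a * (D.g i * (D.g q * D.g i)) := by simp only [mul_assoc]
          _ = -((a * D.g i) * (D.g i * D.g q)) := by rw [pq]; simp only [mul_neg, mul_assoc]
          _ = _ := by rw [ap]; simp only [mul_assoc]
      rcases eq_or_ne i q with rfl | h2
      · have pq' := D.g_anti p i hpq
        calc _ = a * ((D.g p * D.g i) * D.g i) := by simp only [mul_assoc]
          _ = -((a * D.g i) * (D.g p * D.g i)) := by
            conv_lhs => rw [pq']
            simp only [mul_neg, neg_mul, mul_assoc]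
          _ = _ := by rw [aq]; simp only [mul_assoc]
      have hi' : i.1 < 2 * m := by
        have e1 : i.1 ≠ p.1 := fun h => h1 (Fin.ext h)
        have e2 : i.1 ≠ q.1 := fun h => h2 (Fin.ext h)
        omega
      calc _ = a * (D.g p * (D.g q * D.g i)) := by simp only [mul_assoc]
        _ = - (a * ((D.g p * D.g i) * D.g q)) := by
          rw [D.g_anti q i h2.symm]; simp only [mul_neg, mul_assoc]
        _ = (a * D.g i) * D.g p * D.g q := by
          rw [D.g_anti p i h1.symm]; simp only [mul_neg, neg_mul, mul_assoc, neg_neg]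
        _ = _ := by rw [a4 i hi']; simp only [neg_mul, mul_assoc]
    · have h1 : i ≠ p := fun h => by have := congrArg Fin.val h; omega
      have h2 : i ≠ q := fun h => by have := congrArg Fin.val h; omega
      calc _ = a * (D.g p * (D.g q * D.g i)) := by simp only [mul_assoc]
        _ = - (a * ((D.g p * D.g i) * D.g q)) := by
          rw [D.g_anti q i h2.symm]; simp only [mul_neg, mul_assoc]
        _ = (a * D.g i) * D.g p * D.g q := by
          rw [D.g_anti p i h1.symm]; simp only [mul_neg, neg_mul, mul_assoc, neg_neg]
        _ = _ := by rw [a5 i (by omega)]; simp only [mul_assoc]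

/-- The spin-type double cover of the Stiefel manifold, as a set. -/
def coverSet : Set (Matrix ι ι ℝ × (Fin N → EuclideanSpace ℝ (Fin (N + 1)))) :=
  {p | p.1 * p.1.transpose = 1 ∧ (∀ j, p.1 * D.h j = D.h j * p.1) ∧ Orthonormal ℝ p.2 ∧
    ∀ i : Fin N, p.1 * D.g i.castSucc = D.gam (p.2 i) * p.1}

lemma continuous_gam : Continuous D.gam := by
  unfold gam
  fun_prop

lemma entry_bound {ι : Type} [Fintype ι] [DecidableEq ι] (a : Matrix ι ι ℝ)
    (h : a * a.transpose = 1) (i j : ι) : a i j ∈ Set.Icc (-1 : ℝ) 1 := by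
  have hU : a ∈ Matrix.unitaryGroup ι ℝ := by
    rw [Matrix.mem_unitaryGroup_iff]
    simpa [Matrix.star_eq_conjTranspose] using h
  have := entry_norm_bound_of_unitary hU i j
  rw [Real.norm_eq_abs, abs_le] at this
  exact this

lemma isCompact_coverSet : IsCompact D.coverSet := by
  have hK : IsCompact ((Set.univ.pi fun _ => Set.univ.pi fun _ => Set.Icc (-1 : ℝ) 1 :
      Set (Matrix ι ι ℝ)) ×ˢ
      (Set.univ.pi fun _ => Metric.closedBall (0 : EuclideanSpace ℝ (Fin (N + 1))) 1 :
      Set (Fin N → EuclideanSpace ℝ (Fin (N + 1))))) := by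
    refine IsCompact.prod ?_ ?_
    · exact isCompact_univ_pi fun _ => isCompact_univ_pi fun _ => isCompact_Icc
    · exact isCompact_univ_pi fun _ => isCompact_closedBall _ _
  refine hK.of_isClosed_subset ?_ ?_
  · unfold coverSet
    simp only [orthonormal_iff_ite]
    simp only [Set.ofPred_and, Set.ofPred_forall]
    have hg := D.continuous_gam
    refine IsClosed.inter ?_ (IsClosed.inter ?_ (IsClosed.inter ?_ ?_))
    · exact isClosed_eq (by fun_prop) (by fun_prop)
    · exact isClosed_iInter fun j => isClosed_eq (by fun_prop) (by fun_prop)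
    · exact isClosed_iInter fun j => isClosed_iInter fun j => isClosed_eq (by fun_prop) (by fun_prop)
    · exact isClosed_iInter fun j => isClosed_eq (by fun_prop) (by fun_prop)
  · rintro p ⟨h1, -, h3, -⟩
    refine ⟨?_, ?_⟩
    · intro i _ j _
      exact entry_bound p.1 h1 i j
    · intro i _
      simp [h3.1 i]

lemma cover_fiber {a b : Matrix ι ι ℝ} {v : Fin N → EuclideanSpace ℝ (Fin (N + 1))} [Nonempty ι]
    (ha : (a, v) ∈ D.coverSet) (hb : (b, v) ∈ D.coverSet) : a = b ∨ a = -b := by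
  obtain ⟨a1, a2, -, a3⟩ := ha
  obtain ⟨b1, b2, -, b3⟩ := hb
  dsimp only at a1 a2 a3 b1 b2 b3
  have b1' := mul_eq_one_comm.mp b1
  have a1' := mul_eq_one_comm.mp a1
  have hcomm : ∀ x y : Matrix ι ι ℝ, b * x = y * b → b.transpose * y = x * b.transpose := by
    intro x y h
    calc b.transpose * y = b.transpose * (y * b) * b.transpose := by
          rw [mul_assoc, mul_assoc, b1, mul_one]
      _ = (b.transpose * b) * x * b.transpose := by rw [← h]; simp only [mul_assoc]
      _ = _ := by rw [b1', one_mul]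
  obtain ⟨x, hx⟩ := D.comm (b.transpose * a)
    (fun j => by rw [mul_assoc, a2, ← mul_assoc, hcomm _ _ (b2 j), mul_assoc])
    (fun i => by rw [mul_assoc, a3, ← mul_assoc, hcomm _ _ (b3 i), mul_assoc])
  have hab : a = x • b := by
    calc a = (b * b.transpose) * a := by rw [b1, one_mul]
      _ = _ := by rw [mul_assoc, hx]; simp
  have hxx : x * x = 1 := by
    have : (x * x) • (1 : Matrix ι ι ℝ) = 1 := by
      rw [hab, Matrix.transpose_smul, smul_mul_smul_comm, b1] at a1
      exact a1
    obtain ⟨i⟩ := ‹Nonempty ι›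
    have := congrFun (congrFun this i) i
    simpa using this
  rcases mul_self_eq_one_iff.mp hxx with h | h
  · left; rw [hab, h, one_smul]
  · right; rw [hab, h, neg_one_smul]

lemma cover_neg {a : Matrix ι ι ℝ} {v : Fin N → EuclideanSpace ℝ (Fin (N + 1))}
    (ha : (a, v) ∈ D.coverSet) : (-a, v) ∈ D.coverSet := by
  obtain ⟨a1, a2, a4, a3⟩ := ha
  refine ⟨by simpa using a1, by simpa using a2, a4, by simpa using a3⟩

lemma cover_ne {a : Matrix ι ι ℝ} {v : Fin N → EuclideanSpace ℝ (Fin (N + 1))} [Nonempty ι]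
    (ha : (a, v) ∈ D.coverSet) : a ≠ -a := by
  intro h
  have h0 : a = 0 := by
    ext i j
    have := congrFun (congrFun h i) j
    simp at this ⊢; linarith
  have := ha.1
  obtain ⟨i⟩ := ‹Nonempty ι›
  have := congrFun (congrFun this i) i
  simp [h0] at this

/-- The covering projection. -/
def proj (p : D.coverSet) : Stiefel (N + 1) N := ⟨p.1.2, p.2.2.2.1⟩

lemma units_cover (e : ℤˣ) {p : Matrix ι ι ℝ × (Fin N → EuclideanSpace ℝ (Fin (N + 1)))}
    (hp : p ∈ D.coverSet) : (e • p.1, p.2) ∈ D.coverSet := by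
  rcases Int.units_eq_one_or e with rfl | rfl
  · simpa using hp
  · simpa using D.cover_neg hp

noncomputable instance : MulAction ℤˣ D.coverSet where
  smul e p := ⟨(e • p.1.1, p.1.2), D.units_cover e p.2⟩
  one_smul p := by
    apply Subtype.ext
    exact Prod.ext (one_smul _ _) rfl
  mul_smul e f p := by
    apply Subtype.ext
    exact Prod.ext (mul_smul _ _ _) rfl

lemma coe_smul_cover (e : ℤˣ) (p : D.coverSet) : ((e • p : D.coverSet) : _ × _) = (e • p.1.1, p.1.2) := rfl

theorem isCoveringMap_proj [Nonempty ι] : IsCoveringMap D.proj := by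
  have : CompactSpace D.coverSet := isCompact_iff_compactSpace.mp D.isCompact_coverSet
  have hc : Continuous D.proj := by
    unfold proj; fun_prop
  have hs : Function.Surjective D.proj := by
    rintro ⟨v, hv⟩
    obtain ⟨a, a1, a2, a3⟩ := D.exists_lift v hv
    exact ⟨⟨(a, v), a1, a2, hv, a3⟩, rfl⟩
  have hq : Topology.IsQuotientMap D.proj := Topology.IsQuotientMap.of_surjective_continuous hs hc
  have : ContinuousConstSMul ℤˣ D.coverSet := by
    constructor
    intro e
    refine Continuous.subtype_mk (f := fun p : D.coverSet => (e • p.1.1, p.1.2)) ?_ _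
    rcases Int.units_eq_one_or e with rfl | rfl
    · simp only [one_smul]; fun_prop
    · simp only [Units.neg_smul, one_smul]; fun_prop
  have : IsCancelSMul ℤˣ D.coverSet := by
    rw [isCancelSMul_iff_eq_one_of_smul_eq]
    intro e p h
    rcases Int.units_eq_one_or e with rfl | rfl
    · rfl
    · exfalso
      have h' := congrArg (fun q : D.coverSet => q.1.1) h
      simp only [coe_smul_cover, Units.neg_smul, one_smul] at h'
      exact D.cover_ne (v := p.1.2) p.2 h'.symm
  refine (hq.isQuotientCoveringMap_of_properlyDiscontinuousSMul (G := ℤˣ) ?_).isCoveringMap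
  intro p q
  constructor
  · intro h
    have h' : p.1.2 = q.1.2 := congrArg Subtype.val h
    have hp := p.2
    have hp' : (p.1.1, q.1.2) ∈ D.coverSet := by rw [← h']; exact hp
    rcases D.cover_fiber hp' q.2 with h2 | h2
    · exact ⟨1, Subtype.ext (Prod.ext (by simp [h2]) h'.symm)⟩
    · exact ⟨-1, Subtype.ext (Prod.ext (by simp [coe_smul_cover, h2]) h'.symm)⟩
  · rintro ⟨e, rfl⟩
    rfl

end CliffData

theorem no_odd_disk (k : ℕ) (hk : Odd k) (F : ℂ → Stiefel (2 * k + 1) (2 * k)) (hF : Continuous F)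
    (hodd : ∀ z : ℂ, ‖z‖ = 1 → F (-z) = negFrame (F z)) : False := by
  obtain ⟨ι, K, i1, i2, hne, ⟨D⟩⟩ := exists_cliff (2 * k)
  have cov := D.isCoveringMap_proj
  obtain ⟨t, t1, t2, t3, t4, -⟩ := D.exists_twist k le_rfl
  rw [hk.neg_one_pow, neg_one_smul] at t3
  obtain ⟨e₀, he₀⟩ : ∃ e₀, D.proj e₀ = F 0 := by
    obtain ⟨a, a1, a2, a3⟩ := D.exists_lift (F 0).1 (F 0).2
    exact ⟨⟨(a, (F 0).1), a1, a2, (F 0).2, a3⟩, rfl⟩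
  obtain ⟨G, ⟨-, hG⟩, -⟩ := cov.existsUnique_continuousMap_lifts (⟨F, hF⟩ : C(ℂ, _)) 0 e₀ he₀
  have hG2 : ∀ z, (G z).1.2 = (F z).1 := fun z => congrArg Subtype.val (congrFun hG z)
  let a : ℂ → Matrix ι ι ℝ := fun z => (G z).1.1
  have ha : Continuous a := by
    have := G.continuous
    fun_prop
  have hmem : ∀ z, (a z, (F z).1) ∈ D.coverSet := fun z => by
    rw [← hG2]; exact (G z).2
  have htw : ∀ z, ‖z‖ = 1 → (a z * t, (F (-z)).1) ∈ D.coverSet := by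
    intro z hz
    obtain ⟨a1, a2, a3, a4⟩ := hmem z
    dsimp only at a1 a2 a3 a4
    refine ⟨?_, fun j => ?_, (F (-z)).2, fun i => ?_⟩
    · dsimp only
      rw [Matrix.transpose_mul, mul_assoc, ← mul_assoc t, t1, one_mul, a1]
    · dsimp only
      rw [mul_assoc, t2, ← mul_assoc, a2, mul_assoc]
    · dsimp only
      rw [hodd z hz]
      change _ = D.gam (-((F z).1 i)) * _
      rw [mul_assoc, t4 _ (by simp), mul_neg, ← mul_assoc, a4, D.gam_neg, neg_mul, mul_assoc]
  have hpm : ∀ z, ‖z‖ = 1 → a (-z) = a z * t ∨ a (-z) = -(a z * t) := fun z hz =>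
    D.cover_fiber (hmem (-z)) (htw z hz)
  let c : ℝ → ℂ := fun θ => Complex.exp (θ * Complex.I)
  have hc : Continuous c := by fun_prop
  have hc1 : ∀ θ, ‖c θ‖ = 1 := fun θ => Complex.norm_exp_ofReal_mul_I θ
  have hclA : IsClosed {θ : ℝ | a (-(c θ)) = a (c θ) * t} := isClosed_eq (by fun_prop) (by fun_prop)
  have hclB : IsClosed {θ : ℝ | a (-(c θ)) = -(a (c θ) * t)} := isClosed_eq (by fun_prop) (by fun_prop)
  have hcompl : {θ : ℝ | a (-(c θ)) = a (c θ) * t}ᶜ = {θ : ℝ | a (-(c θ)) = -(a (c θ) * t)} := by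
    ext θ
    constructor
    · intro h
      exact (hpm _ (hc1 θ)).resolve_left h
    · intro h h'
      have h1 : a (-(c θ)) = -(a (c θ) * t) := h
      have h2 : a (-(c θ)) = a (c θ) * t := h'
      exact D.cover_ne (htw _ (hc1 θ)) (h2.symm.trans h1)
  have hclopen : IsClopen {θ : ℝ | a (-(c θ)) = a (c θ) * t} :=
    ⟨hclA, by rw [← isClosed_compl_iff, hcompl]; exact hclB⟩
  have c0 : c 0 = 1 := by simp [c]
  have cpi : c Real.pi = -1 := by simp [c]
  have hfin : a 1 = -a 1 := by
    rcases isClopen_iff.mp hclopen with h | h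
    · have hall : ∀ θ, a (-(c θ)) = -(a (c θ) * t) := by
        intro θ
        have : θ ∈ {θ : ℝ | a (-(c θ)) = a (c θ) * t}ᶜ := by rw [h]; simp
        rw [hcompl] at this
        exact this
      have e1 := hall 0
      have e2 := hall Real.pi
      rw [c0] at e1
      rw [cpi, neg_neg] at e2
      rw [e1, neg_mul, neg_neg, mul_assoc, t3, mul_neg, mul_one] at e2
      exact e2
    · have hall : ∀ θ, a (-(c θ)) = a (c θ) * t := by
        intro θ
        have : θ ∈ {θ : ℝ | a (-(c θ)) = a (c θ) * t} := by rw [h]; trivial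
        exact this
      have e1 := hall 0
      have e2 := hall Real.pi
      rw [c0] at e1
      rw [cpi, neg_neg] at e2
      rw [e1, mul_assoc, t3, mul_neg, mul_one] at e2
      exact e2
  exact D.cover_ne (hmem 1) hfin

/-- Quaternionic left multiplication matrix. -/
def quatM (X Y Z : ℝ) : Matrix (Fin 4) (Fin 4) ℝ :=
  !![X, -Y, -Z, 0; Y, X, 0, Z; Z, 0, X, -Y; 0, -Z, Y, X]

lemma quatM_orth (X Y Z : ℝ) (h : X ^ 2 + Y ^ 2 + Z ^ 2 = 1) (a b : Fin 4) :
    ∑ t, quatM X Y Z t a * quatM X Y Z t b = if a = b then 1 else 0 := by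
  fin_cases a <;> fin_cases b <;> simp [quatM, Fin.sum_univ_four] <;> linarith

/-- Stereographic version. -/
noncomputable def quatS (z : ℂ) : Matrix (Fin 4) (Fin 4) ℝ :=
  quatM (2 * z.re / (1 + Complex.normSq z)) (2 * z.im / (1 + Complex.normSq z))
    ((1 - Complex.normSq z) / (1 + Complex.normSq z))

lemma quatS_orth (z : ℂ) (a b : Fin 4) :
    ∑ t, quatS z t a * quatS z t b = if a = b then 1 else 0 := by
  apply quatM_orth
  have : 1 + Complex.normSq z ≠ 0 := by have := Complex.normSq_nonneg z; positivity
  field_simp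
  rw [Complex.normSq_apply]
  ring

lemma quatS_neg (z : ℂ) (hz : ‖z‖ = 1) (a b : Fin 4) : quatS (-z) a b = -quatS z a b := by
  have : Complex.normSq z = 1 := by rw [Complex.normSq_eq_norm_sq, hz]; norm_num
  fin_cases a <;> fin_cases b <;> simp [quatS, quatM, this] <;> ring

lemma quatS_cont (a b : Fin 4) : Continuous (fun z => quatS z a b) := by
  have h : ∀ z : ℂ, 1 + Complex.normSq z ≠ 0 := fun z => by
    have := Complex.normSq_nonneg z; positivity
  have h1 : Continuous fun z : ℂ => 2 * z.re / (1 + Complex.normSq z) :=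
    Continuous.div (by fun_prop) (by have := Complex.continuous_normSq; fun_prop) h
  have h2 : Continuous fun z : ℂ => 2 * z.im / (1 + Complex.normSq z) :=
    Continuous.div (by fun_prop) (by have := Complex.continuous_normSq; fun_prop) h
  have h3 : Continuous fun z : ℂ => (1 - Complex.normSq z) / (1 + Complex.normSq z) :=
    Continuous.div (by have := Complex.continuous_normSq; fun_prop)
      (by have := Complex.continuous_normSq; fun_prop) h
  fin_cases a <;> fin_cases b <;> simp [quatS, quatM] <;> fun_prop

/-- The pair index. -/
def pairIdx {k : ℕ} (i : Fin (2 * k)) : Fin k := ⟨i.1 / 2, by omega⟩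

/-- The sign. -/
noncomputable def sgnIdx {k : ℕ} (i : Fin (2 * k)) : ℝ := if i.1 % 2 = 0 then 1 else -1

lemma pairIdx_flip {k : ℕ} (i : Fin (2 * k)) : pairIdx (finFlip i) = pairIdx i := by
  apply Fin.ext
  simp only [pairIdx, finFlip]
  split_ifs <;> omega

lemma sgnIdx_flip {k : ℕ} (i : Fin (2 * k)) : sgnIdx (finFlip i) = -sgnIdx i := by
  by_cases h : i.1 % 2 = 0
  · have h' : (finFlip i).1 % 2 ≠ 0 := by
      simp only [finFlip]; rw [if_pos h]; omega
    rw [sgnIdx, sgnIdx, if_pos h, if_neg h']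
  · have h' : (finFlip i).1 % 2 = 0 := by
      simp only [finFlip]; rw [if_neg h]; omega
    rw [sgnIdx, sgnIdx, if_neg h, if_pos h', neg_neg]

lemma half_id {k : ℕ} (i j : Fin (2 * k)) :
    (if pairIdx i = pairIdx j then (1 : ℝ) else 0) * (1 + sgnIdx i * sgnIdx j)
      = 2 * (if i = j then 1 else 0) := by
  by_cases hij : i = j
  · subst hij
    simp only [sgnIdx]
    split_ifs <;> norm_num
  · rw [if_neg hij]
    by_cases hp : pairIdx i = pairIdx j
    · have hp' := congrArg Fin.val hp
      simp only [pairIdx] at hp'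
      have hne : i.1 ≠ j.1 := fun h => hij (Fin.ext h)
      simp only [sgnIdx]
      split_ifs <;> first | omega | norm_num
    · rw [if_neg hp]; simp

/-- Coordinates of the test frame. -/
noncomputable def testVec {k l : ℕ} (s : Fin k → Fin l × Fin 4) (z : ℂ) (i : Fin (2 * k)) :
    Fin k ⊕ (Fin l × Fin 4) → ℝ
  | Sum.inl j => if j = pairIdx i then (√2)⁻¹ else 0
  | Sum.inr x => sgnIdx i * (√2)⁻¹ *
      (if x.1 = (s (pairIdx i)).1 then quatS z x.2 (s (pairIdx i)).2 else 0)

lemma testVec_inner {k l : ℕ} (s : Fin k → Fin l × Fin 4) (hs : Function.Injective s) (z : ℂ)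
    (i j : Fin (2 * k)) :
    ∑ c, testVec s z i c * testVec s z j c = if i = j then 1 else 0 := by
  have h2 : (√2)⁻¹ * (√2)⁻¹ = (1 / 2 : ℝ) := by
    rw [← mul_inv, Real.mul_self_sqrt (by norm_num)]; norm_num
  have e1 : ∑ c : Fin k, testVec s z i (Sum.inl c) * testVec s z j (Sum.inl c)
      = (1 / 2) * (if pairIdx i = pairIdx j then (1 : ℝ) else 0) := by
    simp only [testVec]
    rw [Finset.sum_eq_single (pairIdx i)]
    · rw [if_pos rfl]; split_ifs <;> simp [h2]
    · intro b _ hb; rw [if_neg hb, zero_mul]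
    · simp
  have e2 : ∑ c : Fin l × Fin 4, testVec s z i (Sum.inr c) * testVec s z j (Sum.inr c)
      = (1 / 2) * (sgnIdx i * sgnIdx j) * (if pairIdx i = pairIdx j then (1 : ℝ) else 0) := by
    simp only [testVec]
    rw [Fintype.sum_prod_type, Finset.sum_eq_single (s (pairIdx i)).1]
    · simp only [if_true]
      by_cases h : (s (pairIdx i)).1 = (s (pairIdx j)).1
      · simp only [h, if_true]
        have : ∀ t, sgnIdx i * (√2)⁻¹ * quatS z t (s (pairIdx i)).2 *
            (sgnIdx j * (√2)⁻¹ * quatS z t (s (pairIdx j)).2) = (1 / 2) * (sgnIdx i * sgnIdx j) *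
            (quatS z t (s (pairIdx i)).2 * quatS z t (s (pairIdx j)).2) := by
          intro t; rw [← h2]; ring
        simp only [this, ← Finset.mul_sum, quatS_orth]
        have hiff : (s (pairIdx i)).2 = (s (pairIdx j)).2 ↔ pairIdx i = pairIdx j :=
          ⟨fun h' => hs (Prod.ext h h'), fun h' => by rw [h']⟩
        simp only [hiff]
      · have : pairIdx i ≠ pairIdx j := fun h' => h (by rw [h'])
        simp [h, this]
    · intro b _ hb; simp [hb]
    · simp
  rw [Fintype.sum_sum_type, e1, e2]
  have := half_id i j
  linarith

theorem exists_test (k l : ℕ) (hkl : k + 1 = 4 * l) :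
    ∃ Φ : ℂ → Stiefel (2 * k + 1) (2 * k), Continuous Φ ∧
      ∀ z : ℂ, ‖z‖ = 1 → Φ (-z) = flipFrame (Φ z) := by
  obtain ⟨s, hs⟩ : ∃ s : Fin k → Fin l × Fin 4, Function.Injective s :=
    ⟨fun i => finProdFinEquiv.symm (Fin.castLE (by omega) i), fun i j h =>
      Fin.castLE_injective _ (finProdFinEquiv.symm.injective h)⟩
  have e : Fin (2 * k + 1) ≃ Fin k ⊕ (Fin l × Fin 4) :=
    Fintype.equivOfCardEq (by simp; omega)
  refine ⟨fun z => ⟨fun i => WithLp.toLp 2 (fun c => testVec s z i (e c)), ?_⟩, ?_, ?_⟩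
  · rw [orthonormal_iff_ite]
    intro i j
    rw [PiLp.inner_apply, ← testVec_inner s hs z i j, ← e.sum_comp]
    refine Finset.sum_congr rfl fun c _ => ?_
    simp [mul_comm]
  · refine Continuous.subtype_mk ?_ _
    refine continuous_pi fun i => (PiLp.continuous_toLp 2 _).comp (continuous_pi fun c => ?_)
    rcases e c with j | x
    · exact continuous_const
    · simp only [testVec]
      split_ifs
      · exact continuous_const.mul (quatS_cont _ _)
      · fun_prop
  · intro z hz
    apply Subtype.ext
    funext i
    change WithLp.toLp 2 _ = WithLp.toLp 2 _
    congr 1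
    funext c
    rcases e c with j | x
    · simp only [testVec, pairIdx_flip]
    · simp only [testVec, pairIdx_flip, sgnIdx_flip, quatS_neg z hz]
      split_ifs <;> ring

/-- For `n = 2^r − 1` (`r > 2`), writing `n − 1 = 2k`, there is no continuous
equivariant map `V_{n,n-1} → V_{n,n-1}` (i.e. `SO(n) → SO(n)`), where `C₂` acts by
the flip action on the source and antipodally on the target. -/
theorem no_flip_to_antipodal_map_on_SO (r : ℕ) (hr : 2 < r) (n k : ℕ)
    (hn : n = 2 ^ r - 1) (hk : n - 1 = 2 * k) :
    ¬ ∃ f : Stiefel n (2 * k) → Stiefel n (2 * k),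
        Continuous f ∧ ∀ v, f (flipFrame v) = negFrame (f v) := by
  rintro ⟨f, hf, hfe⟩
  obtain ⟨q, rfl⟩ : ∃ q, r = q + 3 := ⟨r - 3, by omega⟩
  have hpow : 2 ^ (q + 3) = 8 * 2 ^ q := by ring
  have hpos : 0 < 2 ^ q := by positivity
  have hk' : k + 1 = 4 * 2 ^ q := by omega
  have hn' : n = 2 * k + 1 := by omega
  subst hn'
  obtain ⟨Φ, hΦ, hΦe⟩ := exists_test k (2 ^ q) hk'
  refine no_odd_disk k ⟨2 * 2 ^ q - 1, by omega⟩ (f ∘ Φ) (hf.comp hΦ) fun z hz => ?_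
  simp only [Function.comp_apply]
  rw [hΦe z hz, hfe]
end

section
/- For every integer n ≥ 6, N_F(n, 6) = n − 5 if n ≡ 1 or 2 (mod 4), N_F(n, 6) = n − 4 if n ≡ 0 (mod 4), and N_F(n, 6) = n − 3 if n ≡ 3 (mod 4). -/
/-- `N_F(n, 2k)`: the minimum `j` with `n - 2k < j ≤ n` such that `C(k + j - 1, j)` is odd.
Here the second argument is `k` (so `NF n k` is the paper's `N_F(n, 2k)`). -/
noncomputable def NF (n k : ℕ) : ℕ :=
  sInf {j : ℕ | n - 2 * k < j ∧ j ≤ n ∧ Odd (Nat.choose (k + j - 1) j)}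

theorem NF_six_odd (j : ℕ) : Odd (Nat.choose (3 + j - 1) j) ↔ (j % 4 = 0 ∨ j % 4 = 1) := by
  have h : 3 + j - 1 = j + 2 := by omega
  rw [h, Nat.choose_symm_add, Nat.choose_two_right, Nat.odd_iff]
  have h2 : j + 2 - 1 = j + 1 := by omega
  rw [h2]
  obtain ⟨q, r, hr, rfl⟩ : ∃ q r, r < 4 ∧ j = 4 * q + r :=
    ⟨j / 4, j % 4, Nat.mod_lt _ (by norm_num), by omega⟩
  have key : ∀ r, (4 * q + r + 2) * (4 * q + r + 1)
      = 4 * (4 * (q * q) + 2 * (q * r) + 3 * q) + (r + 2) * (r + 1) := by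
    intro r; ring
  rw [key]
  generalize 4 * (q * q) + 2 * (q * r) + 3 * q = t
  interval_cases r <;> omega

theorem NF_six_eq (n m : ℕ) (h1 : n - 6 < m) (h2 : m ≤ n) (h3 : m % 4 = 0 ∨ m % 4 = 1)
    (h4 : ∀ j, n - 6 < j → (j % 4 = 0 ∨ j % 4 = 1) → m ≤ j) : NF n 3 = m := by
  unfold NF
  simp only [NF_six_odd]
  apply le_antisymm
  · exact Nat.sInf_le ⟨by omega, h2, h3⟩
  · refine le_csInf ⟨m, by omega, h2, h3⟩ ?_
    rintro j ⟨ha, -, hc⟩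
    exact h4 j (by omega) hc

/-- For every integer `n ≥ 6`, `N_F(n, 6) = n - 5` if `n ≡ 1, 2 (mod 4)`,
`n - 4` if `n ≡ 0 (mod 4)`, and `n - 3` if `n ≡ 3 (mod 4)`. -/
theorem NF_six (n : ℕ) (hn : 6 ≤ n) :
    ((n % 4 = 1 ∨ n % 4 = 2) → NF n 3 = n - 5) ∧
    (n % 4 = 0 → NF n 3 = n - 4) ∧
    (n % 4 = 3 → NF n 3 = n - 3) := by
  refine ⟨fun h => ?_, fun h => ?_, fun h => ?_⟩ <;>
    apply NF_six_eq <;> first | omega | (intro j _ _; omega)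
end

section
/- For every integer k ≥ 1: if k ≡ 1 or 2 (mod 4) then N_F(2k + 1, 2k) = 2, and if k ≡ 1, 5 or 9 (mod 12) then N_F(2k + 2, 2k) = 3. -/
theorem NF_aux2 (k : ℕ) (h : k % 4 = 1 ∨ k % 4 = 2) : Odd (Nat.choose (k + 1) 2) := by
  have e := Nat.descFactorial_eq_factorial_mul_choose (k + 1) 2
  simp [Nat.descFactorial, Nat.factorial] at e
  rcases h with h | h
  · obtain ⟨m, rfl⟩ : ∃ m, k = 4 * m + 1 := ⟨k / 4, by omega⟩
    refine ⟨4 * m ^ 2 + 3 * m, ?_⟩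
    nlinarith
  · obtain ⟨m, rfl⟩ : ∃ m, k = 4 * m + 2 := ⟨k / 4, by omega⟩
    refine ⟨4 * m ^ 2 + 5 * m + 1, ?_⟩
    nlinarith

theorem NF_aux3 (k : ℕ) (h : k % 4 = 1) : Odd (Nat.choose (k + 2) 3) := by
  have e := Nat.descFactorial_eq_factorial_mul_choose (k + 2) 3
  simp [Nat.descFactorial, Nat.factorial] at e
  obtain ⟨m, rfl⟩ : ∃ m, k = 4 * m + 1 := ⟨k / 4, by omega⟩
  have e2 : 3 * Nat.choose (4 * m + 1 + 2) 3 = (4 * m + 3) * (2 * m + 1) * (4 * m + 1) := by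
    nlinarith
  have o : Odd (3 * Nat.choose (4 * m + 1 + 2) 3) := by
    rw [e2]
    exact Odd.mul (Odd.mul ⟨2 * m + 1, by ring⟩ ⟨m, rfl⟩) ⟨2 * m, by ring⟩
  exact (Nat.odd_mul.mp o).2

theorem NF_aux (n k a : ℕ) (h1 : n - 2 * k + 1 = a) (h2 : a ≤ n)
    (h3 : Odd (Nat.choose (k + a - 1) a)) : NF n k = a := by
  have hm : a ∈ {j : ℕ | n - 2 * k < j ∧ j ≤ n ∧ Odd (Nat.choose (k + j - 1) j)} :=
    ⟨by omega, h2, h3⟩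
  apply le_antisymm (Nat.sInf_le hm)
  have := (Nat.sInf_mem ⟨a, hm⟩).1
  omega

/-- For `k ≥ 1`: if `k ≡ 1, 2 (mod 4)` then `N_F(2k + 1, 2k) = 2`, and if
`k ≡ 1, 5, 9 (mod 12)` then `N_F(2k + 2, 2k) = 3`. -/
theorem NF_near_top (k : ℕ) (hk : 1 ≤ k) :
    ((k % 4 = 1 ∨ k % 4 = 2) → NF (2 * k + 1) k = 2) ∧
    ((k % 12 = 1 ∨ k % 12 = 5 ∨ k % 12 = 9) → NF (2 * k + 2) k = 3) := by
  refine ⟨fun h => NF_aux _ _ _ (by omega) (by omega) ?_,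
    fun h => NF_aux _ _ _ (by omega) (by omega) ?_⟩
  · exact NF_aux2 k h
  · exact NF_aux3 k (by omega)
end
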